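/- arXiv:0704.0028 — 4 statements merged into one kernel-verified Lean document; each statement's English description precedes it below -/
import Mathlib

section
/- Let A and B be real n×n matrices with A antisymmetric and B symmetric positive semi-definite, and let p_0, ..., p_{⌊n/2⌋} be the real coefficients defined by the polynomial identity (−1)^{⌊n/2⌋} · pf [[−λA, B], [−B, A]] = Σ_{t=0}^{⌊n/2⌋} p_t λ^t (as polynomials in the real variable λ, where [[−λA, B], [−B, A]] is the 2n×2n block matrix with blocks −λA, B, −B, A). Then p_t ≥ 0 for all t. -/
open Matrix BigOperators

/-- The pfaffian of a `2m × 2m` real matrix, via the symmetrized sum over all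
permutations. -/
noncomputable def pf {m : ℕ} (C : Matrix (Fin (2 * m)) (Fin (2 * m)) ℝ) : ℝ :=
  (1 / (m.factorial * 2 ^ m) : ℝ) *
    ∑ π : Equiv.Perm (Fin (2 * m)),
      ((Equiv.Perm.sign π : ℤ) : ℝ) *
        ∏ i : Fin m, C (π ⟨2 * i.val, by omega⟩) (π ⟨2 * i.val + 1, by omega⟩)

/-- The equivalence used to view a block `2n × 2n` matrix (indexed by `Fin n ⊕ Fin n`)
as a matrix indexed by `Fin (2 * n)`. -/
def blockIndex (n : ℕ) : (Fin n ⊕ Fin n) ≃ Fin (2 * n) :=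
  finSumFinEquiv.trans (finCongr (by omega))

/-!
For real `u`, put `λ = u²`. The block matrix then factors as `M (-J) Mᵀ` with
`det M = det (u A + B)`, so its pfaffian is `det (u A + B)` times the pfaffian of the standard
symplectic matrix `-J`. The latter is positive when the basis is listed in symplectic pairs, and
passing to the block ordering costs exactly the sign `(-1) ^ (n / 2)`. Hence `p t` is a nonnegative
multiple of the coefficient of `u ^ (2 t)` in `det (u A + B)`. After diagonalising `B`, this
coefficient is a sum of products of eigenvalues of `B` with principal minors of a conjugate of `A`,
and a real matrix whose quadratic form is nonnegative (here zero) has nonnegative determinant.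
-/

open Polynomial Equiv Sum

section DetCoefficients

variable {ι κ R : Type*} [Fintype ι] [Fintype κ]

lemma dotProduct_mulVec_self_eq_zero_of_transpose_eq_neg [CommRing R] [IsAddTorsionFree R]
    {A : Matrix ι ι R} (hA : Aᵀ = -A) (x : ι → R) : x ⬝ᵥ A *ᵥ x = 0 := by
  rw [← self_eq_neg, ← dotProduct_neg, ← neg_mulVec, ← hA, mulVec_transpose, dotProduct_mulVec,
    dotProduct_comm]

lemma dotProduct_mul_mul_transpose_mulVec [CommSemiring R] (P : Matrix κ ι R) (A : Matrix ι ι R)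
    (x : κ → R) : x ⬝ᵥ (P * A * Pᵀ) *ᵥ x = (x ᵥ* P) ⬝ᵥ A *ᵥ (x ᵥ* P) := by
  rw [← mulVec_mulVec, ← mulVec_mulVec, mulVec_transpose, dotProduct_mulVec]

variable [DecidableEq ι]

lemma dotProduct_submatrix_mulVec [CommSemiring R] (A : Matrix ι ι R) (e : κ → ι) (x : κ → R) :
    x ⬝ᵥ A.submatrix e e *ᵥ x =
      (x ᵥ* (1 : Matrix ι ι R).submatrix e id) ⬝ᵥ
        A *ᵥ (x ᵥ* (1 : Matrix ι ι R).submatrix e id) := by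
  rw [← dotProduct_mul_mul_transpose_mulVec]
  congr 2
  ext i j
  simp [mul_apply, one_apply]

lemma det_nonneg_of_dotProduct_mulVec_nonneg {M : Matrix ι ι ℝ}
    (hM : ∀ x, 0 ≤ x ⬝ᵥ M *ᵥ x) : 0 ≤ M.det := by
  -- Otherwise some proper convex combination of `1` and `M` is singular, yet its form is definite.
  by_contra! hneg
  have hcont : Continuous fun s : ℝ ↦ ((1 - s) • (1 : Matrix ι ι ℝ) + s • M).det := by fun_prop
  obtain ⟨s, ⟨hs0, hs1⟩, hs⟩ := intermediate_value_Icc' zero_le_one hcont.continuousOn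
    (show (0 : ℝ) ∈ _ by simp [hneg.le])
  have hs1' : s < 1 := hs1.lt_of_ne fun h ↦ hneg.ne (by simpa [h] using hs)
  obtain ⟨v, hv, hv0⟩ := exists_mulVec_eq_zero_iff.2 hs
  have hform : (1 - s) * (v ⬝ᵥ v) + s * (v ⬝ᵥ M *ᵥ v) = 0 := by
    simpa [add_mulVec, smul_mulVec] using congrArg (v ⬝ᵥ ·) hv0
  have hvv : 0 < v ⬝ᵥ v := dotProduct_self_star_pos_iff.2 hv
  nlinarith [mul_pos (sub_pos.2 hs1') hvv, mul_nonneg hs0 (hM v)]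

lemma det_diagonal_add [CommRing R] (d : ι → R) (M : Matrix ι ι R) :
    (diagonal d + M).det =
      ∑ S : Finset ι, (∏ i ∈ Sᶜ, d i) * (M.submatrix (↑) (↑) : Matrix S S R).det := by
  rw [add_comm]
  refine (detRowAlternating.map_add_univ M (diagonal d)).trans
    (Finset.sum_congr rfl fun S _ ↦ ?_)
  rw [← det_piecewise_one_eq_submatrix_det, ← smul_eq_mul]
  refine Eq.trans (congrArg det ?_)
    (detRowAlternating.toMultilinearMap.map_piecewise_smul d (S.piecewise M.row (row 1)) Sᶜ)
  ext i j
  by_cases hi : i ∈ S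
  · simp [hi, Finset.piecewise, row]
  · simp [hi, Finset.piecewise, row, diagonal_apply, one_apply]

lemma eval_det_X_smul_add_C [CommRing R] (A B : Matrix ι ι R) (u : R) :
    (det ((X : R[X]) • A.map C + B.map C)).eval u = (u • A + B).det := by
  rw [← coe_evalRingHom, RingHom.map_det]
  congr 1
  ext i j
  simp [mul_comm u]

lemma coeff_det_X_smul_add_C_diagonal_nonneg {A : Matrix ι ι ℝ} (hA : ∀ x, 0 ≤ x ⬝ᵥ A *ᵥ x)
    {d : ι → ℝ} (hd : 0 ≤ d) (k : ℕ) :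
    0 ≤ (det ((X : ℝ[X]) • A.map C + (diagonal d).map C)).coeff k := by
  rw [add_comm, diagonal_map C_0, det_diagonal_add, finsetSum_coeff]
  refine Finset.sum_nonneg fun S _ ↦ ?_
  have hminor : 0 ≤ (A.submatrix (↑) (↑) : Matrix S S ℝ).det :=
    det_nonneg_of_dotProduct_mulVec_nonneg fun x ↦ by
      rw [dotProduct_submatrix_mulVec]; exact hA _
  have hterm : (∏ i ∈ Sᶜ, C (d i)) *
      (((X : ℝ[X]) • A.map C).submatrix (↑) (↑) : Matrix S S ℝ[X]).det =
        C ((∏ i ∈ Sᶜ, d i) * (A.submatrix (↑) (↑) : Matrix S S ℝ).det) * X ^ S.card := by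
    rw [submatrix_smul, Pi.smul_apply, Pi.smul_apply, det_smul, submatrix_map,
      ← RingHom.mapMatrix_apply, ← RingHom.map_det, Fintype.card_coe, C_mul, map_prod]
    ring
  rw [hterm, coeff_C_mul_X_pow]
  split_ifs
  exacts [mul_nonneg (Finset.prod_nonneg fun i _ ↦ hd i) hminor, le_rfl]

lemma det_X_smul_add_C_conj_of_mul_eq_one [CommRing R] {U V : Matrix ι ι R} (hUV : U * V = 1)
    (A B : Matrix ι ι R) :
    det ((X : R[X]) • (U * A * V).map C + (U * B * V).map C) =
      det ((X : R[X]) • A.map C + B.map C) := by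
  have hmap : (X : R[X]) • (U * A * V).map C + (U * B * V).map C =
      U.map C * ((X : R[X]) • A.map C + B.map C) * V.map C := by
    simp [Matrix.map_mul, Matrix.mul_add, Matrix.add_mul]
  have hUV' : U.map (C : R →+* R[X]) * V.map C = 1 := by
    rw [← Matrix.map_mul, hUV, Matrix.map_one _ C_0 C_1]
  rw [hmap, det_conj_of_mul_eq_one hUV' (mul_eq_one_comm.1 hUV')]

lemma coeff_det_X_smul_add_C_nonneg {A B : Matrix ι ι ℝ} (hA : ∀ x, 0 ≤ x ⬝ᵥ A *ᵥ x)
    (hB : B.PosSemidef) (k : ℕ) : 0 ≤ (det ((X : ℝ[X]) • A.map C + B.map C)).coeff k := by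
  set U : Matrix ι ι ℝ := (hB.1.eigenvectorUnitary : Matrix ι ι ℝ)
  have hUU : Uᵀ * U = 1 := Unitary.coe_star_mul_self hB.1.eigenvectorUnitary
  have hspec : Uᵀ * B * U = diagonal hB.1.eigenvalues := by
    simpa [star_eq_conjTranspose, Function.comp_def] using
      hB.1.conjStarAlgAut_star_eigenvectorUnitary
  rw [← det_X_smul_add_C_conj_of_mul_eq_one hUU, hspec]
  refine coeff_det_X_smul_add_C_diagonal_nonneg (fun x ↦ ?_) hB.eigenvalues_nonneg k
  simpa using (dotProduct_mul_mul_transpose_mulVec Uᵀ A x).symm ▸ hA _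

end DetCoefficients

section Products

variable {ι β R : Type*} [Fintype ι] [DecidableEq ι] [CommMonoid R]

lemma prod_update_inl (g : β → β → R) (v : ι ⊕ ι → β) (j : ι) (x : β) :
    ∏ i, g (Function.update v (inl j) x (inl i)) (Function.update v (inl j) x (inr i)) =
      g x (v (inr j)) * ∏ i ∈ {j}ᶜ, g (v (inl i)) (v (inr i)) := by
  rw [Fintype.prod_eq_mul_prod_compl j]
  congr 1
  · simp
  · refine Finset.prod_congr rfl fun i hi ↦ ?_
    have hij : i ≠ j := by simpa using hi
    simp [hij]

lemma prod_update_inr (g : β → β → R) (v : ι ⊕ ι → β) (j : ι) (x : β) :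
    ∏ i, g (Function.update v (inr j) x (inl i)) (Function.update v (inr j) x (inr i)) =
      g (v (inl j)) x * ∏ i ∈ {j}ᶜ, g (v (inl i)) (v (inr i)) := by
  rw [Fintype.prod_eq_mul_prod_compl j]
  congr 1
  · simp
  · refine Finset.prod_congr rfl fun i hi ↦ ?_
    have hij : i ≠ j := by simpa using hi
    simp [hij]

end Products

lemma exists_eq_prodCongrLeft_mul_prodCongrRight {ι β : Type*} [Finite ι] [Finite β] [Nonempty β]
    (σ : Perm (ι × β)) (hσ : ∀ i b c, (σ (i, b)).1 = (σ (i, c)).1) :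
    ∃ (τ : Perm ι) (ε : ι → Perm β), σ = prodCongrLeft (fun _ ↦ τ) * prodCongrRight ε := by
  obtain ⟨b₀⟩ := ‹Nonempty β›
  have hτ : Function.Surjective fun i ↦ (σ (i, b₀)).1 := fun k ↦
    ⟨(σ.symm (k, b₀)).1, by simp [hσ _ b₀ (σ.symm (k, b₀)).2]⟩
  have hε (i : ι) : Function.Injective fun b ↦ (σ (i, b)).2 := fun b c hbc ↦
    (Prod.ext_iff.1 (σ.injective (Prod.ext (hσ i b c) hbc))).2
  refine ⟨.ofBijective _ hτ.bijective_of_finite, fun i ↦ .ofBijective _ (hε i).bijective_of_finite,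
    Equiv.ext fun ⟨i, b⟩ ↦ Prod.ext (hσ i b b₀) rfl⟩

lemma sign_prodCongrLeft_mul_prodCongrRight_bool {ι : Type*} [Fintype ι] [DecidableEq ι]
    (τ : Perm ι) (ε : ι → Perm Bool) :
    Perm.sign (prodCongrLeft (fun _ ↦ τ) * prodCongrRight ε) = ∏ i, Perm.sign (ε i) := by
  simp [Perm.sign_prodCongrLeft, Perm.sign_prodCongrRight]

lemma sign_symm_trans_eq_prod {ι : Type*} [Fintype ι] {N : ℕ} (e f : ι ≃ Fin N) :
    Perm.sign (e.symm.trans f) = ∏ x, ∏ y, if e y < e x ∧ f x < f y then -1 else 1 := by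
  rw [Perm.sign_eq_prod_prod_Iio, ← e.prod_comp]
  refine Finset.prod_congr rfl fun x _ ↦ ?_
  rw [← Finset.filter_gt_eq_Iio, Finset.prod_filter, ← e.prod_comp]
  refine Finset.prod_congr rfl fun y _ ↦ ?_
  rcases eq_or_ne x y with rfl | hxy
  · simp
  · have hfxy := f.injective.ne hxy
    simp only [Equiv.trans_apply, Equiv.symm_apply_apply]
    grind

lemma intCast_units_mul_self {R : Type*} [Ring R] (e : ℤˣ) : ((e : ℤ) : R) * ((e : ℤ) : R) = 1 := by
  rw [← Int.cast_mul, ← Units.val_mul, Int.units_mul_self, Units.val_one, Int.cast_one]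

lemma prod_range_neg_one_pow (n : ℕ) :
    ∏ j ∈ Finset.range n, (-1 : ℤˣ) ^ j = (-1) ^ (n / 2) := by
  induction n using Nat.twoStepInduction with
  | zero => simp
  | one => simp
  | more k ih _ =>
    rw [Finset.prod_range_succ, Finset.prod_range_succ, mul_assoc, ← pow_add, ih,
      Odd.neg_one_pow (n := k + (k + 1)) ⟨k, by omega⟩, Nat.add_div_right _ two_pos, pow_succ]

/-- The identification of `ι × Bool` with `ι ⊕ ι` under which `{i} × Bool` is the pair
`{inl i, inr i}`. It lets permutations preserving these pairs be written with
`prodCongrLeft` and `prodCongrRight`. -/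
def prodBoolEquivSum (ι : Type*) : ι × Bool ≃ ι ⊕ ι :=
  (prodComm ι Bool).trans (boolProdEquivSum ι)

@[simp]
lemma prodBoolEquivSum_false {ι : Type*} (i : ι) : prodBoolEquivSum ι (i, false) = inl i := rfl

@[simp]
lemma prodBoolEquivSum_true {ι : Type*} (i : ι) : prodBoolEquivSum ι (i, true) = inr i := rfl

@[simp]
lemma prodBoolEquivSum_symm_inl {ι : Type*} (i : ι) :
    (prodBoolEquivSum ι).symm (inl i) = (i, false) := rfl

@[simp]
lemma prodBoolEquivSum_symm_inr {ι : Type*} (i : ι) :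
    (prodBoolEquivSum ι).symm (inr i) = (i, true) := rfl

section StandardSymplecticMatrix

variable {ι R : Type*} [DecidableEq ι] [CommRing R]

lemma neg_J_apply_eq_zero {x y : ι × Bool} (hxy : x.1 ≠ y.1) :
    (-J ι R) (prodBoolEquivSum ι x) (prodBoolEquivSum ι y) = 0 := by
  obtain ⟨i, _ | _⟩ := x <;> obtain ⟨j, _ | _⟩ := y <;> simp_all [J]

lemma neg_J_apply_perm (i : ι) (ρ : Perm Bool) :
    (-J ι R) (prodBoolEquivSum ι (i, ρ false)) (prodBoolEquivSum ι (i, ρ true)) =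
      ((Perm.sign ρ : ℤ) : R) := by
  obtain rfl | rfl : ρ = 1 ∨ ρ = swap false true := by decide +revert
  · simp [J]
  · simp [J]

end StandardSymplecticMatrix

section PfaffianSum

variable {ι R : Type*} [Fintype ι] [DecidableEq ι] [CommRing R]

/-- The pfaffian without its factor `1 / (m! 2ᵐ)`, for matrices indexed by `ι ⊕ ι`. The factors
are indexed by the pairs `{inl i, inr i}`, so that no order on `ι` is involved and block matrices
need no reindexing. -/
def pfaffianSum (C : Matrix (ι ⊕ ι) (ι ⊕ ι) R) : R :=
  ∑ σ : Perm (ι ⊕ ι), ((Perm.sign σ : ℤ) : R) * ∏ i, C (σ (inl i)) (σ (inr i))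

lemma pfaffianSum_submatrix_perm (C : Matrix (ι ⊕ ι) (ι ⊕ ι) R) (τ : Perm (ι ⊕ ι)) :
    pfaffianSum (C.submatrix τ τ) = ((Perm.sign τ : ℤ) : R) * pfaffianSum C := by
  rw [pfaffianSum, pfaffianSum, Finset.mul_sum]
  refine Fintype.sum_equiv (Equiv.mulLeft τ) _ _ fun σ ↦ ?_
  simp [← mul_assoc, intCast_units_mul_self]

/-- The multilinear map `v ↦ ∏ i, v (inl i)ᵀ C v (inr i)`, whose alternatization turns the
signed sum in `pfaffianSum` into an alternating map of the rows of a matrix. -/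
def pairProduct (C : Matrix (ι ⊕ ι) (ι ⊕ ι) R) :
    MultilinearMap R (fun _ : ι ⊕ ι ↦ ι ⊕ ι → R) R :=
  .mk' (fun v ↦ ∏ i, v (inl i) ⬝ᵥ C *ᵥ v (inr i))
    (by
      rintro v (j | j) x y
      · simp only [prod_update_inl fun x y ↦ x ⬝ᵥ C *ᵥ y, add_dotProduct, add_mul]
      · simp only [prod_update_inr fun x y ↦ x ⬝ᵥ C *ᵥ y, mulVec_add, dotProduct_add, add_mul])
    (by
      rintro v (j | j) c x
      · simp only [prod_update_inl fun x y ↦ x ⬝ᵥ C *ᵥ y, smul_dotProduct, smul_mul_assoc]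
      · simp only [prod_update_inr fun x y ↦ x ⬝ᵥ C *ᵥ y, mulVec_smul, dotProduct_smul,
          smul_mul_assoc])

lemma alternatization_pairProduct_apply (C : Matrix (ι ⊕ ι) (ι ⊕ ι) R) (v : ι ⊕ ι → ι ⊕ ι → R) :
    (pairProduct C).alternatization v = pfaffianSum (of v * C * (of v)ᵀ) := by
  rw [MultilinearMap.alternatization_apply]
  simp only [pfaffianSum, mul_mul_apply, transpose_transpose]
  refine Finset.sum_congr rfl fun σ _ ↦ ?_
  rw [Units.smul_def, zsmul_eq_mul]
  rfl

-- Both sides are alternating in the rows of `M`, so it suffices to compare them at `M = 1`.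
lemma pfaffianSum_mul_mul_transpose (M C : Matrix (ι ⊕ ι) (ι ⊕ ι) R) :
    pfaffianSum (M * C * Mᵀ) = M.det * pfaffianSum C := by
  have hbasis : of (Pi.basisFun R (ι ⊕ ι)) = 1 := by
    ext i j
    simp [one_apply, Pi.single_apply, eq_comm]
  have hdet := DFunLike.congr_fun
    ((pairProduct C).alternatization.eq_smul_basis_det (Pi.basisFun R (ι ⊕ ι))) M.row
  rw [AlternatingMap.smul_apply, Pi.basisFun_det_apply, alternatization_pairProduct_apply,
    alternatization_pairProduct_apply, hbasis, Matrix.one_mul, transpose_one,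
    Matrix.mul_one] at hdet
  rw [mul_comm]
  exact hdet

-- The unipotent factor clears the corner `-u² A`, leaving `[[0, u A + B], [u A - B, A]]`, and
-- `u A - B = -(u A + B)ᵀ`.
lemma fromBlocks_eq_mul_neg_J_mul_transpose [Invertible (2 : R)] {A B : Matrix ι ι R}
    (hA : Aᵀ = -A) (hB : Bᵀ = B) (u : R) :
    fromBlocks (-(u ^ 2 • A)) B (-B) A =
      (fromBlocks 1 (-(u • 1)) 0 1 * fromBlocks (u • A + B) 0 (⅟(2 : R) • A) 1) * -J ι R *
        (fromBlocks 1 (-(u • 1)) 0 1 * fromBlocks (u • A + B) 0 (⅟(2 : R) • A) 1)ᵀ := by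
  have hhalf : ⅟(2 : R) • A + ⅟(2 : R) • A = A := by
    rw [← add_smul, invOf_two_add_invOf_two, one_smul]
  have hinner : fromBlocks (u • A + B) 0 (⅟(2 : R) • A) 1 * -J ι R *
      (fromBlocks (u • A + B) 0 (⅟(2 : R) • A) 1)ᵀ = fromBlocks 0 (u • A + B) (u • A - B) A := by
    simp [J, fromBlocks_neg, fromBlocks_transpose, fromBlocks_multiply, hA, hB, hhalf,
      neg_add_eq_sub]
  have houter : fromBlocks 1 (-(u • 1)) 0 1 * fromBlocks 0 (u • A + B) (u • A - B) A *
      (fromBlocks 1 (-(u • 1)) 0 1)ᵀ = fromBlocks (-(u ^ 2 • A)) B (-B) A := by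
    simp only [fromBlocks_transpose, fromBlocks_multiply, Matrix.mul_one, Matrix.one_mul,
      Matrix.mul_zero, Matrix.zero_mul, zero_add, transpose_one, transpose_smul,
      transpose_neg, transpose_zero, Matrix.mul_neg, Matrix.neg_mul, Matrix.mul_smul,
      Matrix.smul_mul]
    congr 1 <;> module
  simp only [← houter, ← hinner, transpose_mul, Matrix.mul_assoc]

lemma pfaffianSum_fromBlocks [Invertible (2 : R)] {A B : Matrix ι ι R} (hA : Aᵀ = -A)
    (hB : Bᵀ = B) (u : R) :
    pfaffianSum (fromBlocks (-(u ^ 2 • A)) B (-B) A) =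
      (u • A + B).det * pfaffianSum (-J ι R) := by
  rw [fromBlocks_eq_mul_neg_J_mul_transpose hA hB, pfaffianSum_mul_mul_transpose, det_mul]
  simp

lemma pfaffianSum_eq_sum_perm_prod_bool (C : Matrix (ι ⊕ ι) (ι ⊕ ι) R) :
    pfaffianSum C = ∑ σ : Perm (ι × Bool), ((Perm.sign σ : ℤ) : R) *
      ∏ i, C (prodBoolEquivSum ι (σ (i, false))) (prodBoolEquivSum ι (σ (i, true))) :=
  Fintype.sum_equiv (prodBoolEquivSum ι).symm.permCongr _ _ fun σ ↦ by simp

-- Such a `σ` permutes the pairs `{i} × Bool`, and each pair it flips contributes `-1` to both the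
-- sign and the product.
lemma sign_mul_prod_neg_J_eq_one {σ : Perm (ι × Bool)}
    (hσ : ∀ i, (-J ι R) (prodBoolEquivSum ι (σ (i, false)))
      (prodBoolEquivSum ι (σ (i, true))) ≠ 0) :
    ((Perm.sign σ : ℤ) : R) *
      ∏ i, (-J ι R) (prodBoolEquivSum ι (σ (i, false))) (prodBoolEquivSum ι (σ (i, true))) = 1 := by
  have hfst (i : ι) : (σ (i, false)).1 = (σ (i, true)).1 := by
    by_contra hne
    exact hσ i (neg_J_apply_eq_zero hne)
  obtain ⟨τ, ε, rfl⟩ := exists_eq_prodCongrLeft_mul_prodCongrRight σ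
    (by rintro i (_ | _) (_ | _) <;> simp only [hfst])
  rw [sign_prodCongrLeft_mul_prodCongrRight_bool, Units.coe_prod, Int.cast_prod,
    ← Finset.prod_mul_distrib]
  refine Finset.prod_eq_one fun i _ ↦ ?_
  simp only [Perm.mul_apply, prodCongrRight_apply, prodCongrLeft_apply, neg_J_apply_perm,
    intCast_units_mul_self]

lemma pfaffianSum_neg_J_nonneg [PartialOrder R] [IsOrderedRing R] :
    0 ≤ pfaffianSum (-J ι R) := by
  rw [pfaffianSum_eq_sum_perm_prod_bool]
  refine Finset.sum_nonneg fun σ _ ↦ ?_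
  by_cases hσ : ∀ i, (-J ι R) (prodBoolEquivSum ι (σ (i, false)))
      (prodBoolEquivSum ι (σ (i, true))) ≠ 0
  · exact (sign_mul_prod_neg_J_eq_one hσ).symm ▸ zero_le_one
  · push Not at hσ
    obtain ⟨i, hi⟩ := hσ
    rw [Finset.prod_eq_zero (Finset.mem_univ i) hi, mul_zero]

end PfaffianSum

/-- The enumeration of `Fin n ⊕ Fin n` by `Fin (2 * n)` that lists each pair `inl i, inr i`
consecutively, which is the pairing used in `pf`; `blockIndex` instead lists one block after the
other. -/
def interleave (n : ℕ) : Fin n ⊕ Fin n ≃ Fin (2 * n) :=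
  ((prodBoolEquivSum (Fin n)).symm.trans ((Equiv.refl _).prodCongr finTwoEquiv.symm)).trans
      (finProdFinEquiv.trans (finCongr (mul_comm n 2)))

@[simp]
lemma interleave_inl_val {n : ℕ} (i : Fin n) : (interleave n (inl i) : ℕ) = 2 * i := by
  simp [interleave, finTwoEquiv]

@[simp]
lemma interleave_inr_val {n : ℕ} (i : Fin n) : (interleave n (inr i) : ℕ) = 2 * i + 1 := by
  simp [interleave, finTwoEquiv, add_comm]

@[simp]
lemma blockIndex_inl_val {n : ℕ} (i : Fin n) : (blockIndex n (inl i) : ℕ) = i := by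
  simp [blockIndex]

@[simp]
lemma blockIndex_inr_val {n : ℕ} (i : Fin n) : (blockIndex n (inr i) : ℕ) = n + i := by
  simp [blockIndex, add_comm]

lemma pf_eq_pfaffianSum {m : ℕ} (C : Matrix (Fin (2 * m)) (Fin (2 * m)) ℝ) :
    pf C = (m.factorial * 2 ^ m : ℝ)⁻¹ *
      pfaffianSum (C.submatrix (interleave m) (interleave m)) := by
  rw [pf, one_div, pfaffianSum]
  congr 1
  refine Fintype.sum_equiv (interleave m).symm.permCongr _ _ fun π ↦ ?_
  have hl (i : Fin m) : interleave m (inl i) = ⟨2 * i.val, by omega⟩ := by ext; simp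
  have hr (i : Fin m) : interleave m (inr i) = ⟨2 * i.val + 1, by omega⟩ := by ext; simp
  simp [hl, hr]

lemma sign_interleave_symm_trans_blockIndex (n : ℕ) :
    Perm.sign ((interleave n).symm.trans (blockIndex n)) = (-1) ^ (n / 2) := by
  have hlt (j : Fin n) : ∏ i : Fin n, (if (i : ℕ) < j then (-1 : ℤˣ) else 1) = (-1) ^ (j : ℕ) := by
    simp only [Fin.val_fin_lt]
    rw [← Finset.prod_filter, Finset.filter_gt_eq_Iio, Finset.prod_const, Fin.card_Iio]
  have hll (i j : Fin n) : ¬ (2 * (j : ℕ) < 2 * i ∧ (i : ℕ) < j) := by omega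
  have hlr (i j : Fin n) : (2 * (j : ℕ) + 1 < 2 * i ∧ (i : ℕ) < n + j) ↔ (j : ℕ) < i := by omega
  have hrl (i j : Fin n) : ¬ (2 * (j : ℕ) < 2 * i + 1 ∧ n + (i : ℕ) < j) := by omega
  have hrr (i j : Fin n) : ¬ (2 * (j : ℕ) + 1 < 2 * i + 1 ∧ n + (i : ℕ) < n + j) := by omega
  simp only [sign_symm_trans_eq_prod, Fintype.prod_sum_type, Fin.lt_def, interleave_inl_val,
    interleave_inr_val, blockIndex_inl_val, blockIndex_inr_val, hll, hlr, hrl, hrr, if_false,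
    Finset.prod_const_one, one_mul, mul_one, hlt]
  rw [← prod_range_neg_one_pow, Fin.prod_univ_eq_prod_range fun j ↦ (-1 : ℤˣ) ^ j]

lemma neg_one_pow_mul_pf_submatrix_blockIndex_symm {n : ℕ}
    (C : Matrix (Fin n ⊕ Fin n) (Fin n ⊕ Fin n) ℝ) :
    (-1) ^ (n / 2) * pf (C.submatrix (blockIndex n).symm (blockIndex n).symm) =
      (n.factorial * 2 ^ n : ℝ)⁻¹ * pfaffianSum C := by
  let τ : Perm (Fin n ⊕ Fin n) := (interleave n).trans (blockIndex n).symm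
  have hτ : Perm.sign τ = (-1) ^ (n / 2) := by
    rw [← sign_interleave_symm_trans_blockIndex, ← Perm.sign_inv,
      ← Perm.sign_permCongr (blockIndex n)]
    congr 1
    ext; simp [τ]
  have hsq : (-1 : ℝ) ^ (n / 2) * (-1) ^ (n / 2) = 1 := by simp [← mul_pow]
  rw [pf_eq_pfaffianSum, submatrix_submatrix, mul_left_comm]
  change _ * (_ * pfaffianSum (C.submatrix τ τ)) = _
  rw [pfaffianSum_submatrix_perm, hτ]
  simp [← mul_assoc, hsq]

theorem pfaffian_block_coeffs_nonneg (n : ℕ) (A B : Matrix (Fin n) (Fin n) ℝ)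
    (hA : Aᵀ = -A) (hBsymm : Bᵀ = B)
    (hBpsd : ∀ x : Fin n → ℝ, 0 ≤ x ⬝ᵥ B *ᵥ x)
    (p : ℕ → ℝ)
    (hp : ∀ l : ℝ,
      (-1 : ℝ) ^ (n / 2) *
          pf ((Matrix.fromBlocks (-(l • A)) B (-B) A).submatrix
            (blockIndex n).symm (blockIndex n).symm)
        = ∑ t ∈ Finset.range (n / 2 + 1), p t * l ^ t) :
    ∀ t ≤ n / 2, 0 ≤ p t := by
  let c : ℝ := (n.factorial * 2 ^ n : ℝ)⁻¹ * pfaffianSum (-J (Fin n) ℝ)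
  let Q : ℝ[X] := det ((X : ℝ[X]) • A.map C + B.map C)
  have hc : 0 ≤ c := mul_nonneg (by positivity) pfaffianSum_neg_J_nonneg
  have hA0 (x : Fin n → ℝ) : 0 ≤ x ⬝ᵥ A *ᵥ x :=
    (dotProduct_mulVec_self_eq_zero_of_transpose_eq_neg hA x).ge
  have hB : B.PosSemidef := .of_dotProduct_mulVec_nonneg
    ((conjTranspose_eq_transpose_of_trivial B).trans hBsymm) (by simpa using hBpsd)
  have hpoly : ∑ t ∈ Finset.range (n / 2 + 1), monomial (2 * t) (p t) = C c * Q := by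
    let _ : Invertible (2 : ℝ) := invertibleOfNonzero two_ne_zero
    refine Polynomial.funext fun u ↦ ?_
    calc _ = ∑ t ∈ Finset.range (n / 2 + 1), p t * (u ^ 2) ^ t := by
          simp [eval_finsetSum, pow_mul]
      _ = (n.factorial * 2 ^ n : ℝ)⁻¹ * ((u • A + B).det * pfaffianSum (-J (Fin n) ℝ)) := by
          rw [← hp, neg_one_pow_mul_pf_submatrix_blockIndex_symm, pfaffianSum_fromBlocks hA hBsymm]
      _ = (C c * Q).eval u := by
          rw [eval_mul, eval_C, eval_det_X_smul_add_C, mul_assoc, mul_comm (det _)]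
  intro t ht
  have hpt : p t = c * Q.coeff (2 * t) := by
    simpa [finsetSum_coeff, coeff_monomial, Nat.lt_succ_iff, ht] using
      congrArg (coeff · (2 * t)) hpoly
  exact hpt ▸ mul_nonneg hc (coeff_det_X_smul_add_C_nonneg hA0 hB _)
end

section
/- Let A and B be real n×n matrices with A antisymmetric and B symmetric positive semi-definite, and let λ ≥ 0 be a real number. Then (−1)^{⌊n/2⌋} · pf [[−λA, B], [−B, A]] ≥ det B, where [[−λA, B], [−B, A]] denotes the 2n×2n block matrix with blocks −λA, B, −B, A. -/
open Matrix BigOperators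

/-!
Simultaneous row and column operations act on the pfaffian by `pf (P * C * Pᵀ) = det P * pf C`. With
`λ = s ^ 2`, adding `s` times the second block row and column to the first turns the block matrix
into `[[0, B + s A], [-(B + s A)ᵀ, A]]`, whose pfaffian is `(-1) ^ ⌊n / 2⌋ * det (B + s A)`; the
sign is that of the shuffle which pairs row `i` with row `n + i`.

It remains to see that adding an antisymmetric matrix `M` to `B` does not decrease the determinant.
For `B = 1`, `det (1 + M) ^ 2 = det (1 + M * Mᵀ) ≥ 1`, and `det (1 + t M)` cannot vanish on
`[0, 1]`; congruence gives the case of a positive definite `B`, and continuity the general one.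
-/

open scoped Kronecker

section SkewPerturbation

variable {ι : Type*} [Fintype ι] [DecidableEq ι]

lemma one_le_det_one_add_of_posSemidef {Q : Matrix ι ι ℝ} (hQ : Q.PosSemidef) :
    1 ≤ (1 + Q).det := by
  have hdet : (1 + Q).det = ∏ i, (1 + hQ.1.eigenvalues i) := by
    have h := congrArg (Polynomial.eval (-1)) hQ.1.charpoly_eq
    have hneg : scalar ι (-1 : ℝ) - Q = -(1 + Q) := by
      rw [map_neg, map_one, neg_add']
    have hfactor (i : ι) : -1 - hQ.1.eigenvalues i = -1 * (1 + hQ.1.eigenvalues i) := by ring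
    rw [eval_charpoly, hneg, det_neg, Polynomial.eval_prod] at h
    simpa [-map_neg, -neg_mul, hfactor, Finset.prod_mul_distrib] using h
  rw [hdet]
  exact Finset.one_le_prod fun i _ => le_add_of_nonneg_right (hQ.eigenvalues_nonneg i)

lemma one_le_det_one_add_sq {N : Matrix ι ι ℝ} (hN : Nᵀ = -N) : 1 ≤ (1 + N).det ^ 2 := by
  have hsq : (1 + N) * (1 + N)ᵀ = 1 + N * Nᴴ := by
    rw [conjTranspose_eq_transpose_of_trivial, transpose_add, transpose_one, hN]
    noncomm_ring
  calc 1 ≤ (1 + N * Nᴴ).det :=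
        one_le_det_one_add_of_posSemidef (posSemidef_self_mul_conjTranspose N)
    _ = (1 + N).det ^ 2 := by rw [← hsq, det_mul, det_transpose, sq]

lemma one_le_det_one_add {N : Matrix ι ι ℝ} (hN : Nᵀ = -N) : 1 ≤ (1 + N).det := by
  have hsq (t : ℝ) : 1 ≤ (1 + t • N).det ^ 2 :=
    one_le_det_one_add_sq (by rw [transpose_smul, hN, smul_neg])
  have hcont : Continuous fun t : ℝ => (1 + t • N).det := by fun_prop
  have hpos : 0 < (1 + N).det := by
    by_contra! hneg
    obtain ⟨t, -, ht⟩ : (0 : ℝ) ∈ (fun t : ℝ => (1 + t • N).det) '' Set.Icc 0 1 :=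
      intermediate_value_Icc' zero_le_one hcont.continuousOn (by simpa using hneg)
    have := hsq t
    norm_num [show (1 + t • N).det = 0 from ht] at this
  exact (one_le_sq_iff₀ hpos.le).1 (by simpa using hsq 1)

open scoped MatrixOrder in
lemma det_le_det_add_of_posDef {B M : Matrix ι ι ℝ} (hB : B.PosDef) (hM : Mᵀ = -M) :
    B.det ≤ (B + M).det := by
  obtain ⟨S, hS, rfl⟩ : ∃ S : Matrix ι ι ℝ, IsUnit S.det ∧ B = Sᵀ * S := by
    obtain ⟨S, hS, hBS⟩ := CStarAlgebra.isStrictlyPositive_iff_eq_star_mul_self.mp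
      hB.isStrictlyPositive
    exact ⟨S, (isUnit_iff_isUnit_det S).1 hS, hBS⟩
  set N := S⁻¹ᵀ * M * S⁻¹ with hNdef
  have hN : Nᵀ = -N := by simp [hNdef, hM, mul_assoc]
  have hMN : M = Sᵀ * N * S := by
    simp only [hNdef, transpose_nonsing_inv, mul_assoc]
    rw [nonsing_inv_mul S hS, mul_one, mul_nonsing_inv_cancel_left _ _ (by rwa [det_transpose])]
  calc (Sᵀ * S).det ≤ (Sᵀ * S).det * (1 + N).det :=
        le_mul_of_one_le_right hB.det_pos.le (one_le_det_one_add hN)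
    _ = (Sᵀ * (1 + N) * S).det := by simp only [det_mul]; ring
    _ = (Sᵀ * S + M).det := by rw [hMN]; noncomm_ring

lemma det_le_det_add_of_posSemidef {B M : Matrix ι ι ℝ} (hB : B.PosSemidef) (hM : Mᵀ = -M) :
    B.det ≤ (B + M).det := by
  have hle (t : ℝ) (ht : t ∈ Set.Ioi 0) : (B + t • 1).det ≤ (B + t • 1 + M).det :=
    det_le_det_add_of_posDef (PosDef.posSemidef_add hB (PosDef.one.smul ht)) hM
  have hclosed : (0 : ℝ) ∈ closure (Set.Ioi 0) := by simp
  simpa using le_on_closure hle (by fun_prop) (by fun_prop) hclosed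

end SkewPerturbation

section TransposeSign

lemma prod_prod_ite_lt {M : Type*} [CommMonoid M] (n : ℕ) (c : M) :
    ∏ i : Fin n, ∏ j : Fin n, (if i < j then c else 1) = c ^ n.choose 2 := by
  rw [Finset.prod_comm]
  have hcol (j : Fin n) : ∏ i : Fin n, (if i < j then c else 1) = c ^ (j : ℕ) := by
    rw [← Finset.prod_filter, Finset.filter_gt_eq_Iio, Finset.prod_const, Fin.card_Iio]
  simp only [hcol]
  rw [Finset.prod_pow_eq_pow_sum, Fin.sum_univ_eq_sum_range (fun j => j), Finset.sum_range_id,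
    Nat.choose_two_right]

lemma neg_one_pow_choose_two {R : Type*} [Monoid R] [HasDistribNeg R] (n : ℕ) :
    (-1 : R) ^ n.choose 2 = (-1) ^ (n / 2) := by
  induction n using Nat.twoStepInduction with
  | zero => rfl
  | one => rfl
  | more n ih _ =>
    have hchoose : (n + 2).choose 2 = n.choose 2 + (2 * n + 1) := by
      rw [Nat.choose_succ_succ', Nat.choose_succ_succ' n 1, Nat.choose_one_right,
        Nat.choose_one_right]
      ring
    rw [hchoose, pow_add, ih, Odd.neg_one_pow ⟨n, rfl⟩, Nat.add_div_right n two_pos, pow_succ]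

lemma finProdFinEquiv_lt_iff {m n : ℕ} (x y : Fin m × Fin n) :
    finProdFinEquiv x < finProdFinEquiv y ↔ x.1 < y.1 ∨ x.1 = y.1 ∧ x.2 < y.2 := by
  obtain ⟨i, j⟩ := x
  obtain ⟨i', j'⟩ := y
  have hlt {k k' : Fin m} (l l' : Fin n) (h : k < k') :
      finProdFinEquiv (k, l) < finProdFinEquiv (k', l') :=
    calc (l + n * k : ℕ) < n + n * k := by gcongr; exact l.2
      _ = n * (k + 1) := by ring
      _ ≤ n * k' := by gcongr; exact h
      _ ≤ l' + n * k' := Nat.le_add_left _ _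
  rcases lt_trichotomy i i' with h | rfl | h
  · simp [h, hlt]
  · simp [← Fin.val_fin_lt]
  · simp [h.not_gt, h.ne', (hlt j' j h).le]

/-- The permutation of the positions `0, …, m * n - 1` of an `m × n` array that turns its row-by-row
enumeration into the column-by-column one: position `j + n * i` is sent to `i + m * j`. It relates
the block order of the rows of a `2 × 2` block matrix to the order in which `pf` pairs them. -/
def arrayTranspose (m n : ℕ) : Equiv.Perm (Fin (m * n)) :=
  finProdFinEquiv.symm.trans <|
    (Equiv.prodComm _ _).trans <| finProdFinEquiv.trans <| finCongr (mul_comm n m)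

lemma arrayTranspose_lt_iff {m n : ℕ} (x y : Fin m × Fin n) :
    arrayTranspose m n (finProdFinEquiv x) < arrayTranspose m n (finProdFinEquiv y) ↔
      x.2 < y.2 ∨ x.2 = y.2 ∧ x.1 < y.1 := by
  simpa [arrayTranspose] using finProdFinEquiv_lt_iff x.swap y.swap

lemma sign_arrayTranspose (m n : ℕ) :
    Equiv.Perm.sign (arrayTranspose m n) = (-1) ^ (n.choose 2 * m.choose 2) := by
  have hinv (x y : Fin m × Fin n) :
      (if finProdFinEquiv x < finProdFinEquiv y then
        if arrayTranspose m n (finProdFinEquiv x) < arrayTranspose m n (finProdFinEquiv y) then 1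
        else -1 else 1 : ℤˣ) = if x.1 < y.1 then if y.2 < x.2 then -1 else 1 else 1 := by
    simp only [finProdFinEquiv_lt_iff, arrayTranspose_lt_iff]
    grind
  have hrows (i i' : Fin m) :
      ∏ j : Fin n, ∏ j' : Fin n, (if i < i' then if j' < j then -1 else 1 else 1 : ℤˣ) =
        if i < i' then (-1) ^ n.choose 2 else 1 := by
    split_ifs
    · rw [Finset.prod_comm, prod_prod_ite_lt]
    · simp only [Finset.prod_const_one]
  calc Equiv.Perm.sign (arrayTranspose m n)
      = ∏ i : Fin m, ∏ j : Fin n, ∏ i' : Fin m, ∏ j' : Fin n,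
          (if i < i' then if j' < j then -1 else 1 else 1) := by
        simp only [Equiv.Perm.sign_eq_prod_prod_Ioi, ← Finset.filter_lt_eq_Ioi,
          Finset.prod_filter, ← finProdFinEquiv.prod_comp, hinv, Fintype.prod_prod_type]
    _ = ∏ i : Fin m, ∏ i' : Fin m, if i < i' then (-1) ^ n.choose 2 else 1 := by
        simp only [← hrows]
        exact Finset.prod_congr rfl fun _ _ => Finset.prod_comm
    _ = (-1) ^ (n.choose 2 * m.choose 2) := by rw [prod_prod_ite_lt, pow_mul]

end TransposeSign

section ProdShear

variable {κ β : Type*}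

lemma sign_prodShear [Fintype κ] [DecidableEq κ] [Fintype β] [DecidableEq β]
    (σ : Equiv.Perm κ) (s : κ → Equiv.Perm β) :
    Equiv.Perm.sign (σ.prodShear s) =
      Equiv.Perm.sign σ ^ Fintype.card β * ∏ i, Equiv.Perm.sign (s i) := by
  have h : σ.prodShear s = Equiv.prodCongrLeft (fun _ => σ) * Equiv.prodCongrRight s := rfl
  simp [h, Equiv.Perm.sign_prodCongrLeft, Equiv.Perm.sign_prodCongrRight]

lemma exists_eq_prodShear [Finite κ] [Finite β] [Nonempty β]
    (π : Equiv.Perm (κ × β)) (hπ : ∀ i b b', (π (i, b)).1 = (π (i, b')).1) :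
    ∃ (σ : Equiv.Perm κ) (s : κ → Equiv.Perm β), π = σ.prodShear s := by
  obtain ⟨b₀⟩ := ‹Nonempty β›
  have hsurj : Function.Surjective fun i => (π (i, b₀)).1 := fun k => by
    obtain ⟨⟨i, b⟩, hib⟩ := π.surjective (k, b₀)
    exact ⟨i, by simp only [hπ i b₀ b, hib]⟩
  have hinj (i : κ) : Function.Injective fun b => (π (i, b)).2 := fun b b' hbb' =>
    congrArg Prod.snd (π.injective (Prod.ext (hπ i b b') hbb'))
  refine ⟨.ofBijective _ (Finite.surjective_iff_bijective.1 hsurj),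
    fun i => .ofBijective _ (Finite.injective_iff_bijective.1 (hinj i)), ?_⟩
  ext1 ⟨i, b⟩
  exact Prod.ext (hπ i b b₀) rfl

lemma prodShear_injective [Nonempty β] :
    Function.Injective fun p : Equiv.Perm κ × (κ → Equiv.Perm β) => p.1.prodShear p.2 := by
  rintro ⟨σ, s⟩ ⟨σ', s'⟩ h
  have happ (i : κ) (b : β) : (σ i, s i b) = (σ' i, s' i b) := DFunLike.congr_fun h (i, b)
  obtain ⟨b₀⟩ := ‹Nonempty β›
  ext i
  · exact congrArg Prod.fst (happ i b₀)
  · exact congrArg Prod.snd (happ i _)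

end ProdShear

section PfaffianSum

variable {κ ι R : Type*} [Fintype κ] [DecidableEq κ] [Fintype ι] [CommRing R]

/-- The pfaffian of `C` without the factor `1 / (m! * 2 ^ m)`, so that it makes sense over every
commutative ring. The rows of `C` are indexed by `κ × Fin 2`, so that the pairs occurring in the
products are the fibres over `κ` and no order on the indices is needed. -/
def pfSum (C : Matrix (κ × Fin 2) (κ × Fin 2) R) : R :=
  ∑ π : Equiv.Perm (κ × Fin 2), ((Equiv.Perm.sign π : ℤ) : R) * ∏ i, C (π (i, 0)) (π (i, 1))

lemma mul_mul_transpose_apply {α : Type*} (P : Matrix α ι R) (C : Matrix ι ι R) (a : Fin 2 → α) :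
    (P * C * Pᵀ) (a 0) (a 1) = ∑ f : Fin 2 → ι, C (f 0) (f 1) * ∏ b, P (a b) (f b) := by
  rw [← (finTwoArrowEquiv ι).symm.sum_comp, Fintype.sum_prod_type_right]
  simp only [mul_apply, transpose_apply, Finset.sum_mul, Fin.prod_univ_two]
  refine Finset.sum_congr rfl fun j _ => Finset.sum_congr rfl fun i _ => ?_
  change P (a 0) i * C i j * P (a 1) j = C i j * (P (a 0) i * P (a 1) j)
  ring

lemma pfSum_mul_mul_transpose_eq_sum_det (P : Matrix (κ × Fin 2) ι R) (C : Matrix ι ι R) :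
    pfSum (P * C * Pᵀ) =
      ∑ h : κ × Fin 2 → ι, (∏ i, C (h (i, 0)) (h (i, 1))) * (P.submatrix id h).det := by
  have hexpand (π : Equiv.Perm (κ × Fin 2)) :
      ∏ i, (P * C * Pᵀ) (π (i, 0)) (π (i, 1)) =
        ∑ h : κ × Fin 2 → ι, (∏ i, C (h (i, 0)) (h (i, 1))) * ∏ x, P (π x) (h x) := by
    have hrow (i : κ) := mul_mul_transpose_apply P C fun b => π (i, b)
    simp only [hrow]
    rw [Fintype.prod_sum, ← (Equiv.curry κ (Fin 2) ι).sum_comp]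
    simp only [Finset.prod_mul_distrib, Fintype.prod_prod_type, Equiv.curry_apply,
      Function.curry_apply]
  simp only [pfSum, hexpand, Finset.mul_sum, det_apply', submatrix_apply, id]
  rw [Finset.sum_comm]
  exact Finset.sum_congr rfl fun _ _ => Finset.sum_congr rfl fun _ _ => mul_left_comm _ _ _

lemma pfSum_mul_mul_transpose (P C : Matrix (κ × Fin 2) (κ × Fin 2) R) :
    pfSum (P * C * Pᵀ) = P.det * pfSum C := by
  rw [pfSum_mul_mul_transpose_eq_sum_det, pfSum, Finset.mul_sum]
  symm
  refine Fintype.sum_of_injective (fun π : Equiv.Perm (κ × Fin 2) => ⇑π) DFunLike.coe_injective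
    _ _ (fun h hh => ?_) (fun π => ?_)
  · have hinj : ¬ Function.Injective h := fun hinj =>
      hh ⟨Equiv.ofBijective h (Finite.injective_iff_bijective.1 hinj), rfl⟩
    obtain ⟨a, b, hab, hne⟩ := Function.not_injective_iff.1 hinj
    rw [det_zero_of_column_eq hne (by simp [hab]), mul_zero]
  · rw [det_permute']
    ring

lemma skew_apply_perm (s : Equiv.Perm (Fin 2)) :
    (!![0, 1; -1, 0] : Matrix (Fin 2) (Fin 2) R) (s 0) (s 1) = ((Equiv.Perm.sign s : ℤ) : R) := by
  obtain rfl | rfl : s = 1 ∨ s = Equiv.swap 0 1 := by decide +revert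
  · simp
  · simp

variable (κ R) in
lemma pfSum_one_kronecker :
    pfSum ((1 : Matrix κ κ R) ⊗ₖ !![0, 1; -1, 0]) =
      ((Fintype.card κ).factorial * 2 ^ Fintype.card κ : R) := by
  have hcard : ((Fintype.card κ).factorial * 2 ^ Fintype.card κ : R) =
      ∑ _p : Equiv.Perm κ × (κ → Equiv.Perm (Fin 2)), (1 : R) := by
    simp [Fintype.card_perm]
  rw [hcard, pfSum]
  symm
  refine Fintype.sum_of_injective _ prodShear_injective _ _ (fun π hπ => ?_) (fun ⟨σ, s⟩ => ?_)
  · have hsplit : ∃ i, (π (i, 0)).1 ≠ (π (i, 1)).1 := by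
      by_contra! hpair
      obtain ⟨σ, s, rfl⟩ := exists_eq_prodShear π fun i => by
        simp [Fin.forall_fin_two, hpair i]
      exact hπ ⟨(σ, s), rfl⟩
    obtain ⟨i, hi⟩ := hsplit
    rw [Finset.prod_eq_zero (Finset.mem_univ i) (by simp [kroneckerMap_apply, hi]), mul_zero]
  · have hsign : Equiv.Perm.sign (σ.prodShear s) = ∏ i, Equiv.Perm.sign (s i) := by
      rw [sign_prodShear, Fintype.card_fin, Int.units_sq, one_mul]
    have hentry (i : κ) : ((1 : Matrix κ κ R) ⊗ₖ !![0, 1; -1, 0])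
        (σ.prodShear s (i, 0)) (σ.prodShear s (i, 1)) = ((Equiv.Perm.sign (s i) : ℤ) : R) := by
      rw [← skew_apply_perm, kroneckerMap_apply]
      exact (congrArg (· * _) (one_apply_eq (σ i))).trans (one_mul _)
    simp only [hentry, hsign, ← Int.cast_prod, ← Units.coe_prod, ← Int.cast_mul, ← Units.val_mul,
      Int.units_mul_self, Units.val_one, Int.cast_one]

end PfaffianSum

section Pfaffian

/-- The pairing of `Fin (2 * n)` used by `pf`: `(i, b)` is sent to `2 * i + b`. -/
def pairIndex (n : ℕ) : Fin n × Fin 2 ≃ Fin (2 * n) :=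
  finProdFinEquiv.trans (finCongr (mul_comm n 2))

lemma pf_eq_pfSum_div {m : ℕ} (C : Matrix (Fin (2 * m)) (Fin (2 * m)) ℝ) :
    pf C = pfSum (C.submatrix (pairIndex m) (pairIndex m)) / (m.factorial * 2 ^ m) := by
  have h0 (i : Fin m) : pairIndex m (i, 0) = ⟨2 * i, by omega⟩ := by
    ext; simp [pairIndex]
  have h1 (i : Fin m) : pairIndex m (i, 1) = ⟨2 * i + 1, by omega⟩ := by
    ext; simp [pairIndex, add_comm]
  rw [pf, pfSum, one_div, div_eq_inv_mul]
  congr 1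
  refine (Fintype.sum_equiv (pairIndex m).permCongr _ _ fun π => ?_).symm
  simp [Equiv.permCongr_apply, ← h0, ← h1]

lemma pf_mul_mul_transpose_submatrix {m : ℕ} {ι : Type*} [Fintype ι] [DecidableEq ι]
    (e : Fin (2 * m) ≃ ι) (P C : Matrix ι ι ℝ) :
    pf ((P * C * Pᵀ).submatrix e e) = P.det * pf (C.submatrix e e) := by
  have hmul : ((P * C * Pᵀ).submatrix e e).submatrix (pairIndex m) (pairIndex m) =
      P.submatrix ((pairIndex m).trans e) ((pairIndex m).trans e) *
        C.submatrix ((pairIndex m).trans e) ((pairIndex m).trans e) *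
        (P.submatrix ((pairIndex m).trans e) ((pairIndex m).trans e))ᵀ := by
    rw [transpose_submatrix, submatrix_mul_equiv, submatrix_mul_equiv]
    rfl
  rw [pf_eq_pfSum_div, pf_eq_pfSum_div, hmul, pfSum_mul_mul_transpose, det_submatrix_equiv_self,
    mul_div_assoc]
  rfl

lemma pf_submatrix_perm {m : ℕ} (τ : Equiv.Perm (Fin (2 * m)))
    (C : Matrix (Fin (2 * m)) (Fin (2 * m)) ℝ) :
    pf (C.submatrix τ τ) = ((Equiv.Perm.sign τ : ℤ) : ℝ) * pf C := by
  have hperm : τ.permMatrix ℝ * C * (τ.permMatrix ℝ)ᵀ = C.submatrix τ τ := by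
    ext i j
    simp [Equiv.Perm.permMatrix, Equiv.toPEquiv, mul_apply]
  simpa only [hperm, det_permutation, Equiv.coe_refl, submatrix_id_id] using
    pf_mul_mul_transpose_submatrix (Equiv.refl _) (τ.permMatrix ℝ) C

lemma pf_one_kronecker (m : ℕ) :
    pf (((1 : Matrix (Fin m) (Fin m) ℝ) ⊗ₖ !![0, 1; -1, 0]).submatrix
      (pairIndex m).symm (pairIndex m).symm) = 1 := by
  rw [pf_eq_pfSum_div, submatrix_submatrix, Equiv.symm_comp_self, submatrix_id_id,
    pfSum_one_kronecker, Fintype.card_fin, div_self (by positivity)]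

lemma arrayTranspose_blockIndex_inl {n : ℕ} (i : Fin n) :
    arrayTranspose 2 n (blockIndex n (.inl i)) = pairIndex n (i, 0) := by
  have h : blockIndex n (.inl i) = finProdFinEquiv (0, i) := by
    ext; simp [blockIndex]
  simp [h, arrayTranspose, pairIndex]

lemma arrayTranspose_blockIndex_inr {n : ℕ} (i : Fin n) :
    arrayTranspose 2 n (blockIndex n (.inr i)) = pairIndex n (i, 1) := by
  have h : blockIndex n (.inr i) = finProdFinEquiv (1, i) := by
    ext; simp [blockIndex, add_comm]
  simp [h, arrayTranspose, pairIndex]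

lemma pf_fromBlocks_zero_one (n : ℕ) :
    pf ((fromBlocks 0 1 (-1) 0 : Matrix (Fin n ⊕ Fin n) (Fin n ⊕ Fin n) ℝ).submatrix
      (blockIndex n).symm (blockIndex n).symm) = (-1) ^ (n / 2) := by
  have hshuffle : (fromBlocks 0 1 (-1) 0).submatrix (blockIndex n).symm (blockIndex n).symm =
      (((1 : Matrix (Fin n) (Fin n) ℝ) ⊗ₖ !![0, 1; -1, 0]).submatrix
        (pairIndex n).symm (pairIndex n).symm).submatrix
          (arrayTranspose 2 n) (arrayTranspose 2 n) := by
    ext k l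
    obtain ⟨x, rfl⟩ := (blockIndex n).surjective k
    obtain ⟨y, rfl⟩ := (blockIndex n).surjective l
    rcases x with i | i <;> rcases y with j | j <;>
      simp [arrayTranspose_blockIndex_inl, arrayTranspose_blockIndex_inr]
  rw [hshuffle, pf_submatrix_perm, pf_one_kronecker, mul_one, sign_arrayTranspose,
    Nat.choose_self, mul_one, neg_one_pow_choose_two]
  simp

lemma pf_fromBlocks_zero₁₁ {n : ℕ} (X : Matrix (Fin n) (Fin n) ℝ) {Y : Matrix (Fin n) (Fin n) ℝ}
    (hY : Yᵀ = -Y) :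
    pf ((fromBlocks 0 X (-Xᵀ) Y).submatrix (blockIndex n).symm (blockIndex n).symm) =
      (-1) ^ (n / 2) * X.det := by
  obtain ⟨Z, rfl⟩ : ∃ Z : Matrix (Fin n) (Fin n) ℝ, Y = Z - Zᵀ := by
    refine ⟨(1 / 2 : ℝ) • Y, ?_⟩
    rw [transpose_smul, hY]
    module
  have hfactor : fromBlocks 0 X (-Xᵀ) (Z - Zᵀ) =
      fromBlocks X 0 Z 1 * fromBlocks 0 1 (-1) 0 * (fromBlocks X 0 Z 1)ᵀ := by
    simp [fromBlocks_transpose, fromBlocks_multiply, neg_add_eq_sub]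
  rw [hfactor, pf_mul_mul_transpose_submatrix, pf_fromBlocks_zero_one, det_fromBlocks_zero₁₂,
    det_one, mul_one, mul_comm]

lemma pf_fromBlocks_sq_smul {n : ℕ} {A B : Matrix (Fin n) (Fin n) ℝ} (hA : Aᵀ = -A) (hB : Bᵀ = B)
    (s : ℝ) :
    pf ((fromBlocks (-(s ^ 2 • A)) B (-B) A).submatrix (blockIndex n).symm (blockIndex n).symm) =
      (-1) ^ (n / 2) * (B + s • A).det := by
  have hcongr : fromBlocks 1 (s • 1) 0 1 * fromBlocks (-(s ^ 2 • A)) B (-B) A *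
      (fromBlocks 1 (s • 1) 0 1)ᵀ = fromBlocks 0 (B + s • A) (-(B + s • A)ᵀ) A := by
    rw [fromBlocks_transpose, fromBlocks_multiply, fromBlocks_multiply]
    have h₁₁ : -(s ^ 2 • A) + s • s • A = 0 := by module
    simpa [hA, hB, h₁₁] using add_comm (-B) (s • A)
  rw [← pf_fromBlocks_zero₁₁ _ hA, ← hcongr, pf_mul_mul_transpose_submatrix,
    det_fromBlocks_zero₂₁, det_one, one_mul, one_mul]

end Pfaffian

theorem pfaffian_block_ge_det (n : ℕ) (A B : Matrix (Fin n) (Fin n) ℝ)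
    (hA : Aᵀ = -A) (hBsymm : Bᵀ = B)
    (hBpsd : ∀ x : Fin n → ℝ, 0 ≤ x ⬝ᵥ B *ᵥ x)
    (l : ℝ) (hl : 0 ≤ l) :
    B.det ≤ (-1 : ℝ) ^ (n / 2) *
      pf ((Matrix.fromBlocks (-(l • A)) B (-B) A).submatrix
        (blockIndex n).symm (blockIndex n).symm) := by
  have hB : B.PosSemidef := .of_dotProduct_mulVec_nonneg hBsymm hBpsd
  obtain ⟨s, rfl⟩ : ∃ s, l = s ^ 2 := ⟨√l, (Real.sq_sqrt hl).symm⟩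
  have hsign : ((-1 : ℝ) ^ (n / 2)) * (-1) ^ (n / 2) = 1 := by rw [← mul_pow]; simp
  calc B.det ≤ (B + s • A).det :=
        det_le_det_add_of_posSemidef hB (by rw [transpose_smul, hA, smul_neg])
    _ = _ := by rw [pf_fromBlocks_sq_smul hA hBsymm, ← mul_assoc, hsign, one_mul]
end

section
/- Let A and B be real n×n matrices with A antisymmetric and B symmetric, and let p_t be the coefficients defined by the polynomial identity (−1)^{⌊n/2⌋} · pf [[−λA, B], [−B, A]] = Σ_{t=0}^{⌊n/2⌋} p_t λ^t (as polynomials in the real variable λ). Then for each t, p_t = Σ_S Σ_T (−1)^S (−1)^T · pf A_{S,S} · pf A_{T,T} · det B_{N∖S, N∖T}, where the sums run over all subsets S, T of N = {1, ..., n} with |S| = |T| = 2t, A_{S,S} is the submatrix of A with rows and columns indexed by S, B_{N∖S,N∖T} is the submatrix of B with rows indexed by N∖S and columns indexed by N∖T, and for a subset T of size 2t one sets (−1)^T = (−1)^{t + Σ_{j∈T} j}. -/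
open Matrix BigOperators

/-- The monotone enumeration of a subset `S` of `Fin n` of prescribed cardinality `k`,
as a map `Fin k → Fin n`. -/
def enum {n k : ℕ} (S : Finset (Fin n)) (h : S.card = k) : Fin k → Fin n :=
  fun i => (S.orderIsoOfFin h i : Fin n)

/-- The sign `(-1)^S = (-1)^{t + Σ_{j ∈ S} j}` attached to a `2t`-element subset `S`
of `{1, …, n}` (elements of `Fin n` are numbered `1, …, n`, i.e. `j ∈ Fin n`
contributes `j + 1` to the sum). -/
def subsetSign {n : ℕ} (t : ℕ) (S : Finset (Fin n)) : ℝ :=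
  (-1 : ℝ) ^ (t + ∑ j ∈ S, (j.val + 1))

open ExteriorAlgebra Finset
open scoped Nat

/-!
A matrix `A` is read as the element `½ ∑ A i j • u i ∧ u j` of the exterior algebra. Its divided
powers have the pfaffians of the principal submatrices of `A` as coefficients, and its top divided
power is `pf A` times the volume element. For the block matrix `[[A, B], [-Bᵀ, C]]` this element is
`½ ∑ A i j • u i ∧ u j + ½ ∑ C i j • v i ∧ v j + ∑ B i j • u i ∧ v j`, a sum of commuting elements,
so its top divided power is a sum of products of divided powers of the three summands. The divided
powers of the last one have the minors `det B_{U,V}` as coefficients, up to a sign coming from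
separating the factors `u i` from the `v j`. Each of `u` and `v` has only `n` vectors, so only the
products of complementary wedges survive, and `u_S ∧ u_{Sᶜ}` contributes the sign `(-1)^S`.
Replacing `A` by `-λA` scales the term with `|S| = 2t` by `(-λ)^t`, and comparing the coefficients
of the polynomials in `λ` gives the formula.
-/

section Enumeration

/-- The `k`-element subsets of `{0, …, n - 1}`, the index type of the sums over minors. -/
abbrev CardSubset (n k : ℕ) : Type := {S : Finset (Fin n) // S.card = k}

variable {n k : ℕ}

theorem enum_injective (S : Finset (Fin n)) (h : S.card = k) : Function.Injective (enum S h) :=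
  (S.orderEmbOfFin h).injective

theorem range_enum (S : Finset (Fin n)) (h : S.card = k) : Set.range (enum S h) = S :=
  S.range_orderEmbOfFin h

theorem enum_univ (h : (univ : Finset (Fin n)).card = n) : enum univ h = id :=
  (orderEmbOfFin_unique h (fun _ => mem_univ _) strictMono_id).symm

theorem enum_comp_perm_injective :
    Function.Injective fun x : CardSubset n k × Equiv.Perm (Fin k) => enum x.1.1 x.1.2 ∘ x.2 := by
  rintro ⟨⟨S, hS⟩, π⟩ ⟨⟨T, hT⟩, σ⟩ h
  obtain rfl : S = T := by
    simpa only [EquivLike.range_comp, range_enum, coe_inj] using congrArg Set.range h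
  have hπσ : π = σ := DFunLike.coe_injective ((enum_injective S hS).comp_left h)
  rw [hπσ]

theorem exists_enum_comp_perm_eq {v : Fin k → Fin n} (hv : Function.Injective v) :
    ∃ x : CardSubset n k × Equiv.Perm (Fin k), enum x.1.1 x.1.2 ∘ x.2 = v := by
  have hcard : (univ.map ⟨v, hv⟩).card = k := by simp
  have hmem (i : Fin k) : v i ∈ Set.range (enum _ hcard) := by simp [range_enum]
  choose f hf using hmem
  have hf_inj : Function.Injective f := fun i j hij => hv (by rw [← hf i, ← hf j, hij])
  exact ⟨⟨⟨_, hcard⟩, Equiv.ofBijective f (Finite.injective_iff_bijective.1 hf_inj)⟩, funext hf⟩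

theorem sum_eq_sum_enum_comp_perm {V : Type*} [AddCommMonoid V] (F : (Fin k → Fin n) → V)
    (hF : ∀ v, ¬ Function.Injective v → F v = 0) :
    ∑ v, F v = ∑ S : CardSubset n k, ∑ π : Equiv.Perm (Fin k), F (enum S.1 S.2 ∘ π) := by
  rw [← Fintype.sum_prod_type']
  refine (Fintype.sum_of_injective _ enum_comp_perm_injective _ _ (fun v hv => hF v ?_)
    fun _ => rfl).symm
  exact mt exists_enum_comp_perm_eq hv

theorem sum_smul_alternatingMap_comp {R M N : Type*} [CommRing R] [AddCommGroup M] [Module R M]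
    [AddCommGroup N] [Module R N] (G : M [⋀^Fin k]→ₗ[R] N) (u : Fin n → M)
    (c : (Fin k → Fin n) → R) :
    ∑ v, c v • G (u ∘ v) = ∑ S : CardSubset n k,
      (∑ π : Equiv.Perm (Fin k), (Equiv.Perm.sign π : ℤ) * c (enum S.1 S.2 ∘ π)) •
        G (u ∘ enum S.1 S.2) := by
  rw [sum_eq_sum_enum_comp_perm]
  · refine sum_congr rfl fun S _ => ?_
    rw [sum_smul]
    refine sum_congr rfl fun π _ => ?_
    rw [← Function.comp_assoc, G.map_perm, Units.smul_def, ← Int.cast_smul_eq_zsmul R, smul_smul,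
      mul_comm]
  · intro v hv
    rw [G.map_eq_zero_of_not_injective _ fun h => hv h.of_comp, smul_zero]

end Enumeration

section ExteriorProducts

variable {R M : Type*} [CommRing R] [AddCommGroup M] [Module R M]

theorem ι_mul_ι_swap (x y : M) : ι R x * ι R y = -(ι R y * ι R x) :=
  eq_neg_of_add_eq_zero_left (ι_add_mul_swap x y)

theorem ι_mul_prod_map_ι (a : M) (l : List M) :
    ι R a * (l.map (ι R)).prod = (-1 : R) ^ l.length • ((l.map (ι R)).prod * ι R a) := by
  induction l with
  | nil => simp
  | cons x l ih =>
    rw [List.map_cons, List.prod_cons, List.length_cons, ← mul_assoc, ι_mul_ι_swap a x, neg_mul,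
      mul_assoc, ih, mul_smul_comm, pow_succ', mul_smul, neg_one_smul, mul_assoc]

theorem ι_mul_ιMulti {k : ℕ} (a : M) (v : Fin k → M) :
    ι R a * ιMulti R k v = (-1 : R) ^ k • (ιMulti R k v * ι R a) := by
  simpa only [List.map_ofFn, List.length_ofFn, ιMulti_apply, Function.comp_def] using
    ι_mul_prod_map_ι (R := R) a (List.ofFn v)

theorem commute_ι_mul_ι (x y : M) (a : ExteriorAlgebra R M) : Commute (ι R x * ι R y) a := by
  induction a using ExteriorAlgebra.induction with
  | algebraMap r => exact (Algebra.commutes r _).symm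
  | ι z =>
    rw [Commute, SemiconjBy, mul_assoc, ι_mul_ι_swap y z, mul_neg, ← mul_assoc, ι_mul_ι_swap x z,
      neg_mul, neg_neg, mul_assoc]
  | mul a b ha hb => exact ha.mul_right hb
  | add a b ha hb => exact ha.add_right hb

theorem prod_ofFn_ι_mul_ι {r : ℕ} (x y : Fin r → M) :
    (List.ofFn fun i => ι R (x i) * ι R (y i)).prod =
      (-1 : R) ^ r.choose 2 • (ιMulti R r x * ιMulti R r y) := by
  induction r with
  | zero => simp
  | succ r ih =>
    have hsign : (-1 : R) ^ (r + 1).choose 2 = (-1) ^ r.choose 2 * (-1) ^ r := by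
      rw [Nat.choose_succ_succ', Nat.choose_one_right, pow_add, mul_comm]
    calc (List.ofFn fun i => ι R (x i) * ι R (y i)).prod
        = (-1 : R) ^ r.choose 2 • (ι R (x 0) * (ι R (y 0) * ιMulti R r (Fin.tail x)) *
            ιMulti R r (Fin.tail y)) := by
          rw [List.ofFn_succ, List.prod_cons, ih, mul_smul_comm]
          simp only [mul_assoc]
          rfl
      _ = _ := by
          rw [ι_mul_ιMulti, ιMulti_succ_apply x, ιMulti_succ_apply y, hsign, mul_smul]
          simp only [mul_smul_comm, smul_mul_assoc, mul_assoc]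
          rfl

theorem ιMulti_two_mul (s : ℕ) (v : Fin (2 * s) → M) :
    ιMulti R (2 * s) v = (List.ofFn fun i : Fin s =>
      ι R (v ⟨2 * i, by omega⟩) * ι R (v ⟨2 * i + 1, by omega⟩)).prod := by
  rw [ιMulti_apply, List.ofFn_mul', List.prod_flatten, List.map_ofFn]
  simp [Function.comp_def]

end ExteriorProducts

section DividedPower

/-- The divided power `a ^ k / k!` in an algebra over a field `K` of characteristic zero. Unlike
Mathlib's `DividedPowers`, it does not require the algebra to be commutative. -/
noncomputable def dividedPow (K : Type*) {E : Type*} [Field K] [Ring E] [Algebra K E] (k : ℕ)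
    (a : E) : E :=
  (k ! : K)⁻¹ • a ^ k

variable {K E : Type*} [Field K] [Ring E] [Algebra K E]

theorem commute_dividedPow {a b : E} (h : Commute a b) (k : ℕ) :
    Commute (dividedPow K k a) b :=
  (h.pow_left k).smul_left _

theorem dividedPow_add_of_commute [CharZero K] {a b : E} (h : Commute a b) (k : ℕ) :
    dividedPow K k (a + b) =
      ∑ q ∈ antidiagonal k, dividedPow K q.1 a * dividedPow K q.2 b := by
  rw [dividedPow, h.add_pow', smul_sum]
  refine sum_congr rfl fun q hq => ?_
  obtain rfl := mem_antidiagonal.1 hq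
  have hne (m : ℕ) : (m ! : K) ≠ 0 := Nat.cast_ne_zero.2 m.factorial_ne_zero
  rw [dividedPow, dividedPow, smul_mul_smul_comm, ← Nat.cast_smul_eq_nsmul K, smul_smul,
    Nat.cast_add_choose]
  congr 1
  field_simp [hne]

theorem sum_smul_pow {R A κ : Type*} [CommSemiring R] [Semiring A] [Algebra R A] [Fintype κ]
    (r : κ → R) (x : κ → A) (k : ℕ) :
    (∑ i, r i • x i) ^ k =
      ∑ v : Fin k → κ, (∏ a, r (v a)) • (List.ofFn fun a => x (v a)).prod := by
  classical
  rw [← MultilinearMap.mkPiAlgebraFin_apply_const (R := R), MultilinearMap.map_sum]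
  refine sum_congr rfl fun v _ => ?_
  rw [MultilinearMap.map_smul_univ, MultilinearMap.mkPiAlgebraFin_apply]

end DividedPower

section Bivector

variable {R M κ μ : Type*} [CommRing R] [AddCommGroup M] [Module R M] [Fintype κ] [Fintype μ]

/-- The element `∑ i, j, A i j • u i ∧ v j` of degree two of the exterior algebra. -/
noncomputable def bivector (A : Matrix κ μ R) (u : κ → M) (v : μ → M) : ExteriorAlgebra R M :=
  ∑ i, ∑ j, A i j • (ι R (u i) * ι R (v j))

theorem commute_bivector (A : Matrix κ μ R) (u : κ → M) (v : μ → M) (a : ExteriorAlgebra R M) :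
    Commute (bivector A u v) a :=
  Commute.sum_left _ _ _ fun _ _ => Commute.sum_left _ _ _ fun _ _ =>
    (commute_ι_mul_ι _ _ a).smul_left _

theorem bivector_submatrix_equiv {κ' μ' : Type*} [Fintype κ'] [Fintype μ'] (A : Matrix κ μ R)
    (u : κ → M) (v : μ → M) (e : κ' ≃ κ) (e' : μ' ≃ μ) :
    bivector (A.submatrix e e') (u ∘ e) (v ∘ e') = bivector A u v := by
  rw [bivector, bivector, ← e.sum_comp]
  exact sum_congr rfl fun i _ => e'.sum_comp fun j => A (e i) j • (ι R (u (e i)) * ι R (v j))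

theorem bivector_neg_transpose (B : Matrix κ μ R) (u : κ → M) (v : μ → M) :
    bivector (-Bᵀ) v u = bivector B u v := by
  rw [bivector, bivector, sum_comm]
  refine sum_congr rfl fun i _ => sum_congr rfl fun j _ => ?_
  rw [ι_mul_ι_swap, neg_apply, transpose_apply, neg_smul, smul_neg, neg_neg]

theorem bivector_fromBlocks (A : Matrix κ κ R) (B : Matrix κ μ R) (C : Matrix μ μ R) (u : κ → M)
    (v : μ → M) :
    bivector (fromBlocks A B (-Bᵀ) C) (Sum.elim u v) (Sum.elim u v) =
      bivector A u u + bivector C v v + (2 : R) • bivector B u v := by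
  have hsplit : bivector (fromBlocks A B (-Bᵀ) C) (Sum.elim u v) (Sum.elim u v) =
      (bivector A u u + bivector (-Bᵀ) v u) + (bivector B u v + bivector C v v) := by
    simp only [bivector, Fintype.sum_sum_type, sum_add_distrib, fromBlocks_apply₁₁,
      fromBlocks_apply₁₂, fromBlocks_apply₂₁, fromBlocks_apply₂₂, Sum.elim_inl, Sum.elim_inr]
  rw [hsplit, bivector_neg_transpose, two_smul]
  abel

theorem bivector_eq_sum_ι_mul_ι (B : Matrix κ μ R) (u : κ → M) (v : μ → M) :
    bivector B u v = ∑ i, ι R (u i) * ι R (∑ j, B i j • v j) := by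
  simp only [bivector, map_sum, map_smul, mul_sum, mul_smul_comm]

/-- A function on `{0, …, 2s - 1}` as the list of its values on the `s` pairs `{2i, 2i + 1}`, the
pairing used in the definition of `pf`. -/
def pairsEquiv (κ : Type*) (s : ℕ) : (Fin (2 * s) → κ) ≃ (Fin s → κ × κ) where
  toFun v i := (v ⟨2 * i, by omega⟩, v ⟨2 * i + 1, by omega⟩)
  invFun w a := if (a : ℕ) % 2 = 0 then (w ⟨a / 2, by omega⟩).1 else (w ⟨a / 2, by omega⟩).2
  left_inv v := by
    funext a
    dsimp only
    split_ifs <;> exact congrArg v (Fin.ext (by dsimp only; omega))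
  right_inv w := by
    funext i
    have hodd : (2 * (i : ℕ) + 1) / 2 = i := by omega
    simp [hodd]

theorem bivector_pow (A : Matrix κ κ R) (u : κ → M) (s : ℕ) :
    bivector A u u ^ s = ∑ v : Fin (2 * s) → κ,
      (∏ i : Fin s, A (v ⟨2 * i, by omega⟩) (v ⟨2 * i + 1, by omega⟩)) •
        ιMulti R (2 * s) (u ∘ v) := by
  rw [bivector, ← Fintype.sum_prod_type', sum_smul_pow, ← (pairsEquiv κ s).sum_comp]
  refine sum_congr rfl fun v _ => ?_
  rw [ιMulti_two_mul]
  rfl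

end Bivector

section Expansions

variable {R M : Type*} [CommRing R] [AddCommGroup M] [Module R M] {n k : ℕ}

/-- The exterior product of the vectors `u i`, `i ∈ S`, in increasing order of `i`. -/
noncomputable def wedge (u : Fin n → M) (S : CardSubset n k) : ExteriorAlgebra R M :=
  ιMulti R k (u ∘ enum S.1 S.2)

theorem wedge_sum_smul {m : ℕ} (B : Matrix (Fin m) (Fin n) R) (v : Fin n → M)
    (S : CardSubset m k) :
    wedge (R := R) (fun i => ∑ j, B i j • v j) S =
      ∑ T : CardSubset n k, (B.submatrix (enum S.1 S.2) (enum T.1 T.2)).det • wedge v T := by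
  have hexpand : wedge (R := R) (fun i => ∑ j, B i j • v j) S =
      ∑ w : Fin k → Fin n, (∏ a, B (enum S.1 S.2 a) (w a)) • ιMulti R k (v ∘ w) := by
    refine ((ιMulti R k).toMultilinearMap.map_sum
      fun a j => B (enum S.1 S.2 a) j • v j).trans (sum_congr rfl fun w _ => ?_)
    exact (ιMulti R k).toMultilinearMap.map_smul_univ _ (v ∘ w)
  rw [hexpand, sum_smul_alternatingMap_comp]
  refine sum_congr rfl fun T _ => ?_
  rw [← det_transpose, det_apply']
  rfl

theorem ιMulti_comp_perm_mul_ιMulti_comp_perm (x y : Fin k → M) (π : Equiv.Perm (Fin k)) :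
    ιMulti R k (x ∘ π) * ιMulti R k (y ∘ π) = ιMulti R k x * ιMulti R k y := by
  rw [AlternatingMap.map_perm, AlternatingMap.map_perm, smul_mul_smul_comm, Int.units_mul_self,
    one_smul]

theorem sum_ι_mul_ι_pow (x y : Fin n → M) (k : ℕ) :
    (∑ i, ι R (x i) * ι R (y i)) ^ k =
      (k ! * (-1) ^ k.choose 2 : R) • ∑ S : CardSubset n k, wedge x S * wedge y S := by
  have hpow : (∑ i, ι R (x i) * ι R (y i)) ^ k = ∑ v : Fin k → Fin n,
      (-1 : R) ^ k.choose 2 • (ιMulti R k (x ∘ v) * ιMulti R k (y ∘ v)) := by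
    simpa only [one_smul, prod_const_one, prod_ofFn_ι_mul_ι, Function.comp_def] using
      sum_smul_pow (R := R) (fun _ => 1) (fun i => ι R (x i) * ι R (y i)) k
  rw [hpow, ← smul_sum, mul_comm, mul_smul, sum_eq_sum_enum_comp_perm]
  · rw [smul_sum (r := (k ! : R))]
    refine congrArg _ (sum_congr rfl fun S _ => ?_)
    calc ∑ π : Equiv.Perm (Fin k),
          ιMulti R k (x ∘ enum S.1 S.2 ∘ π) * ιMulti R k (y ∘ enum S.1 S.2 ∘ π)
        = ∑ _π : Equiv.Perm (Fin k), wedge x S * wedge y S :=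
          sum_congr rfl fun π _ =>
            ιMulti_comp_perm_mul_ιMulti_comp_perm (x ∘ enum S.1 S.2) (y ∘ enum S.1 S.2) π
      _ = (k ! : R) • (wedge x S * wedge y S) := by
          rw [sum_const, card_univ, Fintype.card_perm, Fintype.card_fin, Nat.cast_smul_eq_nsmul]
  · intro v hv
    rw [AlternatingMap.map_eq_zero_of_not_injective _ _ fun h => hv h.of_comp, zero_mul]

theorem dividedPow_bivector {K M : Type*} [Field K] [CharZero K] [AddCommGroup M] [Module K M]
    {m : ℕ} (B : Matrix (Fin m) (Fin n) K) (u : Fin m → M) (v : Fin n → M) (k : ℕ) :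
    dividedPow K k (bivector B u v) =
      (-1 : K) ^ k.choose 2 • ∑ S : CardSubset m k, ∑ T : CardSubset n k,
        (B.submatrix (enum S.1 S.2) (enum T.1 T.2)).det • (wedge u S * wedge v T) := by
  have hne : (k ! : K) ≠ 0 := Nat.cast_ne_zero.2 k.factorial_ne_zero
  rw [dividedPow, bivector_eq_sum_ι_mul_ι, sum_ι_mul_ι_pow, smul_smul, inv_mul_cancel_left₀ hne]
  simp only [wedge_sum_smul, mul_sum, mul_smul_comm]

theorem dividedPow_half_bivector {M : Type*} [AddCommGroup M] [Module ℝ M]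
    (A : Matrix (Fin n) (Fin n) ℝ) (u : Fin n → M) (s : ℕ) :
    dividedPow ℝ s ((2⁻¹ : ℝ) • bivector A u u) = ∑ S : CardSubset n (2 * s),
      pf (A.submatrix (enum S.1 S.2) (enum S.1 S.2)) • wedge u S := by
  rw [dividedPow, smul_pow, bivector_pow, sum_smul_alternatingMap_comp, smul_smul, smul_sum]
  refine sum_congr rfl fun S _ => ?_
  rw [smul_smul, pf, one_div, mul_inv, inv_pow]
  rfl

end Expansions

section Complements

theorem neg_one_pow_choose_two_s4 {R : Type*} [Ring R] (k : ℕ) :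
    (-1 : R) ^ k.choose 2 = (-1) ^ (k / 2) := by
  induction k using Nat.twoStepInduction with
  | zero => rfl
  | one => rfl
  | more k ih _ =>
    have hchoose : (k + 2).choose 2 = k.choose 2 + (2 * k + 1) := by
      rw [Nat.choose_succ_succ' (k + 1), Nat.choose_succ_succ' k 1, Nat.choose_one_right,
        Nat.choose_one_right]
      ring
    rw [hchoose, pow_add, ih, Nat.add_div_right k two_pos, pow_succ (-1) (k / 2),
      pow_succ _ (2 * k), pow_mul, neg_one_sq, one_pow, one_mul]

variable {R M : Type*} [CommRing R] [AddCommGroup M] [Module R M] {n : ℕ}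

-- Moving the factors selected by `p` to the front costs `∑ (i_j - j)` transpositions, where
-- `i_0 < i_1 < ⋯` are the selected indices.
theorem prod_filter_ι_mul_prod_filter_not_ι (x : Fin n → M) (p : Fin n → Bool) :
    (((List.finRange n).filter p).map (ι R ∘ x)).prod *
        (((List.finRange n).filter (fun i => !p i)).map (ι R ∘ x)).prod =
      (-1 : R) ^ ((((List.finRange n).filter p).map Fin.val).sum +
        ((List.finRange n).filter p).length.choose 2) • ιMulti R n x := by
  induction n with
  | zero => simp
  | succ n ih =>
    have hval : Fin.val ∘ Fin.succ (n := n) = fun i : Fin n => (i : ℕ) + 1 := rfl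
    have hnot : (fun i => !p i) ∘ Fin.succ = fun i => !(p ∘ Fin.succ) i := rfl
    have hsucc : ιMulti R (n + 1) x = ι R (x 0) * ιMulti R n (x ∘ Fin.succ) :=
      ιMulti_succ_apply x
    have ih := ih (x ∘ Fin.succ) (p ∘ Fin.succ)
    simp only [List.finRange_succ, List.filter_cons, List.filter_map, hnot]
    generalize (List.finRange n).filter (p ∘ Fin.succ) = P at ih ⊢
    generalize (List.finRange n).filter (fun i => !(p ∘ Fin.succ) i) = Q at ih ⊢
    have hswap := ι_mul_prod_map_ι (R := R) (x 0) (P.map (x ∘ Fin.succ))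
    rw [List.map_map, List.length_map] at hswap
    cases hp : p 0 with
    | true =>
      have hsign : (-1 : R) ^ ((P.map Fin.val).sum + P.length + (P.length + 1).choose 2) =
          (-1) ^ ((P.map Fin.val).sum + P.length.choose 2) := by
        rw [Nat.choose_succ_succ', Nat.choose_one_right, neg_one_pow_congr]
        grind
      simp only [Bool.not_true, Bool.false_eq_true, if_true, if_false, List.map_cons, List.map_map,
        Function.comp_assoc, List.prod_cons, List.sum_cons, List.length_cons, List.length_map,
        Fin.val_zero, zero_add, hval, List.sum_map_add, List.map_const', List.sum_replicate,
        smul_eq_mul, mul_one, hsign, hsucc]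
      rw [mul_assoc, ih, mul_smul_comm]
      rfl
    | false =>
      simp only [Bool.not_false, Bool.false_eq_true, if_true, if_false, List.map_cons, List.map_map,
        Function.comp_assoc, List.prod_cons, List.length_map, hval, List.sum_map_add,
        List.map_const', List.sum_replicate, smul_eq_mul, mul_one, hsucc]
      rw [add_right_comm, pow_add, mul_comm, mul_smul, ← mul_smul_comm, ← ih, ← mul_assoc,
        ← mul_assoc, hswap, smul_mul_assoc, smul_smul, ← mul_pow, neg_one_mul, neg_neg, one_pow,
        one_smul]
      rfl

theorem ofFn_enum {k : ℕ} (S : Finset (Fin n)) (h : S.card = k) :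
    List.ofFn (enum S h) = (List.finRange n).filter (· ∈ S) := by
  have henum : (List.ofFn (enum S h)).SortedLT := (S.orderEmbOfFin h).strictMono.sortedLT_ofFn
  have hfilter : ((List.finRange n).filter (· ∈ S)).SortedLT :=
    ((List.sortedLT_finRange n).pairwise.filter _).sortedLT
  refine List.Perm.eq_of_pairwise' (r := (· < ·)) henum.pairwise hfilter.pairwise ?_
  rw [List.perm_ext_iff_of_nodup henum.nodup hfilter.nodup]
  intro i
  rw [List.mem_ofFn', range_enum]
  simp

theorem wedge_eq_prod_filter {k : ℕ} (u : Fin n → M) (S : CardSubset n k) :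
    wedge u S = (((List.finRange n).filter (· ∈ S.1)).map (ι R ∘ u)).prod := by
  rw [← ofFn_enum S.1 S.2, List.map_ofFn, wedge, ιMulti_apply]
  rfl

/-- Complementation of subsets, as an equivalence. -/
def CardSubset.compl {k l : ℕ} (h : k + l = n) : CardSubset n k ≃ CardSubset n l where
  toFun S := ⟨S.1ᶜ, by rw [card_compl, S.2, Fintype.card_fin]; omega⟩
  invFun S := ⟨S.1ᶜ, by rw [card_compl, S.2, Fintype.card_fin]; omega⟩
  left_inv S := Subtype.ext (compl_compl S.1)
  right_inv S := Subtype.ext (compl_compl S.1)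

theorem wedge_mul_wedge_compl {k l : ℕ} (h : k + l = n) (u : Fin n → M) (S : CardSubset n k) :
    wedge u S * wedge u (CardSubset.compl h S) =
      (-1 : R) ^ (∑ j ∈ S.1, (j : ℕ) + k.choose 2) • ιMulti R n u := by
  have hlen : ((List.finRange n).filter (· ∈ S.1)).length = k := by
    rw [← ofFn_enum S.1 S.2, List.length_ofFn]
  have hsum : (((List.finRange n).filter (· ∈ S.1)).map Fin.val).sum = ∑ j ∈ S.1, (j : ℕ) := by
    rw [← ofFn_enum S.1 S.2, List.map_ofFn, List.sum_ofFn, ← sum_coe_sort S.1]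
    exact (S.1.orderIsoOfFin S.2).toEquiv.sum_comp fun j => (j : ℕ)
  have hcompl : (fun i => decide (i ∈ (CardSubset.compl h S).1)) = fun i => !decide (i ∈ S.1) := by
    funext i
    simp [CardSubset.compl]
  rw [wedge_eq_prod_filter, wedge_eq_prod_filter, hcompl,
    prod_filter_ι_mul_prod_filter_not_ι, hlen, hsum]

theorem subsetSign_eq {t : ℕ} (S : CardSubset n (2 * t)) :
    subsetSign t S.1 = (-1) ^ (∑ j ∈ S.1, (j : ℕ) + (2 * t).choose 2) := by
  rw [subsetSign, pow_add _ _ ((2 * t).choose 2), neg_one_pow_choose_two_s4, ← pow_add,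
    sum_add_distrib, sum_const, S.2, Nat.mul_div_cancel_left t two_pos, smul_eq_mul, mul_one,
    neg_one_pow_congr]
  grind

theorem wedge_mul_wedge_eq_zero {k l : ℕ} (hn : n ≤ k + l) (u : Fin n → M) {S : CardSubset n k}
    {T : CardSubset n l} (h : T.1 ≠ S.1ᶜ) : wedge (R := R) u S * wedge u T = 0 := by
  refine ιMulti_family_mul_of_not_disjoint R u S T fun hdisj => h ?_
  refine eq_of_subset_of_card_le (subset_compl_iff_disjoint_left.2 hdisj) ?_
  rw [card_compl, S.2, T.2, Fintype.card_fin]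
  omega

end Complements

section BlockPfaffian

variable {M : Type*} [AddCommGroup M] [Module ℝ M] {n : ℕ}

theorem dividedPow_half_bivector_mul_wedge_compl {s l : ℕ} (h : 2 * s + l = n)
    (A : Matrix (Fin n) (Fin n) ℝ) (u : Fin n → M) (S : CardSubset n (2 * s)) :
    dividedPow ℝ s ((2⁻¹ : ℝ) • bivector A u u) * wedge u (CardSubset.compl h S) =
      (subsetSign s S.1 * pf (A.submatrix (enum S.1 S.2) (enum S.1 S.2))) • ιMulti ℝ n u := by
  rw [dividedPow_half_bivector, sum_mul, Fintype.sum_eq_single S]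
  · rw [smul_mul_assoc, wedge_mul_wedge_compl, smul_smul, subsetSign_eq, mul_comm]
  · intro T hTS
    have hcompl : (CardSubset.compl h S).1 ≠ T.1ᶜ := fun hST =>
      hTS (Subtype.ext (compl_injective hST.symm))
    rw [smul_mul_assoc, wedge_mul_wedge_eq_zero h.ge u hcompl, smul_zero]

theorem dividedPow_half_bivector_mul_wedge_eq_zero {s l : ℕ} (h : n < 2 * s + l)
    (A : Matrix (Fin n) (Fin n) ℝ) (u : Fin n → M) (U : CardSubset n l) :
    dividedPow ℝ s ((2⁻¹ : ℝ) • bivector A u u) * wedge u U = 0 := by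
  rw [dividedPow_half_bivector, sum_mul]
  refine sum_eq_zero fun S _ => ?_
  have hcompl : U.1 ≠ S.1ᶜ := fun hUS => by
    have hcard := congrArg card hUS
    have hle := card_le_univ S.1
    rw [card_compl, U.2, S.2, Fintype.card_fin] at hcard
    rw [S.2, Fintype.card_fin] at hle
    omega
  rw [smul_mul_assoc, wedge_mul_wedge_eq_zero h.le u hcompl, smul_zero]

/-- The contribution to the pfaffian of `[[A, B], [-Bᵀ, C]]`, up to a sign depending only on `n` and
`t`, of the terms of degree `t` in the entries of `A`. -/
noncomputable def blockCoeff (A B C : Matrix (Fin n) (Fin n) ℝ) (t : ℕ) : ℝ :=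
  ∑ S : CardSubset n (2 * t), ∑ T : CardSubset n (2 * t),
    subsetSign t S.1 * subsetSign t T.1 *
      pf (A.submatrix (enum S.1 S.2) (enum S.1 S.2)) *
      pf (C.submatrix (enum T.1 T.2) (enum T.1 T.2)) *
      (B.submatrix
        (enum S.1ᶜ (by simp [card_compl, S.2] : S.1ᶜ.card = n - 2 * t))
        (enum T.1ᶜ (by simp [card_compl, T.2] : T.1ᶜ.card = n - 2 * t))).det

/-- The product of divided powers of the three summands of half the bivector of
`[[A, B], [-Bᵀ, C]]`. -/
noncomputable def blockTerm (A B C : Matrix (Fin n) (Fin n) ℝ) (u v : Fin n → M) (s t r : ℕ) :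
    ExteriorAlgebra ℝ M :=
  dividedPow ℝ s ((2⁻¹ : ℝ) • bivector A u u) * dividedPow ℝ t ((2⁻¹ : ℝ) • bivector C v v) *
    dividedPow ℝ r (bivector B u v)

variable (A B C : Matrix (Fin n) (Fin n) ℝ) (u v : Fin n → M)

theorem blockTerm_eq_sum (s t r : ℕ) :
    blockTerm A B C u v s t r = (-1 : ℝ) ^ r.choose 2 •
      ∑ U : CardSubset n r, ∑ V : CardSubset n r,
        (B.submatrix (enum U.1 U.2) (enum V.1 V.2)).det •
          ((dividedPow ℝ s ((2⁻¹ : ℝ) • bivector A u u) * wedge u U) *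
            (dividedPow ℝ t ((2⁻¹ : ℝ) • bivector C v v) * wedge v V)) := by
  rw [blockTerm, dividedPow_bivector, mul_smul_comm]
  simp only [mul_sum, mul_smul_comm]
  refine congrArg _ (sum_congr rfl fun U _ => sum_congr rfl fun V _ => congrArg _ ?_)
  have hcomm := commute_dividedPow (K := ℝ)
    ((commute_bivector C v v (wedge u U)).smul_left (2⁻¹ : ℝ)) t
  rw [mul_assoc, ← mul_assoc (dividedPow ℝ t _), hcomm.eq]
  simp only [mul_assoc]

theorem blockTerm_of_ne {s t r : ℕ} (h : s + t + r = n) (hst : s ≠ t) :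
    blockTerm A B C u v s t r = 0 := by
  rw [blockTerm_eq_sum, sum_eq_zero, smul_zero]
  refine fun U _ => sum_eq_zero fun V _ => ?_
  rcases hst.lt_or_gt with hlt | hgt
  · rw [dividedPow_half_bivector_mul_wedge_eq_zero (by omega) C v V, mul_zero, smul_zero]
  · rw [dividedPow_half_bivector_mul_wedge_eq_zero (by omega) A u U, zero_mul, smul_zero]

theorem blockTerm_self {t : ℕ} (h : 2 * t ≤ n) :
    blockTerm A B C u v t t (n - 2 * t) =
      ((-1) ^ ((n - 2 * t) / 2) * blockCoeff A B C t) • (ιMulti ℝ n u * ιMulti ℝ n v) := by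
  have hcompl : 2 * t + (n - 2 * t) = n := by omega
  rw [blockTerm_eq_sum, ← (CardSubset.compl hcompl).sum_comp, neg_one_pow_choose_two_s4, mul_smul,
    blockCoeff, sum_smul]
  refine congrArg _ (sum_congr rfl fun S _ => ?_)
  rw [← (CardSubset.compl hcompl).sum_comp, sum_smul]
  refine sum_congr rfl fun T _ => ?_
  rw [dividedPow_half_bivector_mul_wedge_compl, dividedPow_half_bivector_mul_wedge_compl,
    smul_mul_smul_comm, smul_smul]
  congr 1
  rw [mul_comm, mul_mul_mul_comm, ← mul_assoc]
  rfl

theorem sum_antidiagonal_of_diagonal {V : Type*} [AddCommMonoid V] (n : ℕ) (F : ℕ → ℕ → ℕ → V)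
    (hF : ∀ s t r, s + t + r = n → s ≠ t → F s t r = 0) :
    ∑ q ∈ antidiagonal n, ∑ q' ∈ antidiagonal q.1, F q'.1 q'.2 q.2 =
      ∑ t ∈ range (n / 2 + 1), F t t (n - 2 * t) := by
  rw [sum_sigma']
  symm
  refine sum_of_injOn (fun t => ⟨(2 * t, n - 2 * t), (t, t)⟩) ?_ ?_ ?_ fun _ _ => rfl
  · intro s _ t _ hst
    simpa using congrArg (fun x => x.1.1) hst
  · intro t ht
    simp only [coe_range, Set.mem_Iio, coe_sigma, Set.mem_sigma_iff, mem_coe,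
      HasAntidiagonal.mem_antidiagonal] at ht ⊢
    omega
  · rintro ⟨⟨i, r⟩, ⟨s, t⟩⟩ hmem hnot
    simp only [mem_sigma, HasAntidiagonal.mem_antidiagonal] at hmem
    obtain ⟨hn, rfl⟩ := hmem
    refine hF s t r hn ?_
    rintro rfl
    obtain rfl : r = n - 2 * s := by omega
    exact hnot ⟨s, by simp only [coe_range, Set.mem_Iio]; omega, by simp only [two_mul]⟩

theorem dividedPow_half_bivector_fromBlocks :
    dividedPow ℝ n ((2⁻¹ : ℝ) •
        bivector (fromBlocks A B (-Bᵀ) C) (Sum.elim u v) (Sum.elim u v)) =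
      (∑ t ∈ range (n / 2 + 1), (-1) ^ ((n - 2 * t) / 2) * blockCoeff A B C t) •
        (ιMulti ℝ n u * ιMulti ℝ n v) := by
  have hA (a : ExteriorAlgebra ℝ M) : Commute ((2⁻¹ : ℝ) • bivector A u u) a :=
    (commute_bivector A u u a).smul_left _
  have hB := (commute_bivector B u v ((2⁻¹ : ℝ) • bivector A u u + (2⁻¹ : ℝ) • bivector C v v)).symm
  calc dividedPow ℝ n ((2⁻¹ : ℝ) •
        bivector (fromBlocks A B (-Bᵀ) C) (Sum.elim u v) (Sum.elim u v))
      = dividedPow ℝ n ((2⁻¹ : ℝ) • bivector A u u + (2⁻¹ : ℝ) • bivector C v v +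
          bivector B u v) := by
        rw [bivector_fromBlocks, smul_add, smul_add, inv_smul_smul₀ two_ne_zero]
    _ = ∑ q ∈ antidiagonal n, ∑ q' ∈ antidiagonal q.1, blockTerm A B C u v q'.1 q'.2 q.2 := by
        rw [dividedPow_add_of_commute hB]
        simp only [dividedPow_add_of_commute (hA _), sum_mul, blockTerm]
    _ = ∑ t ∈ range (n / 2 + 1), blockTerm A B C u v t t (n - 2 * t) :=
        sum_antidiagonal_of_diagonal n _ fun _ _ _ => blockTerm_of_ne A B C u v
    _ = _ := by
        rw [sum_smul]
        refine sum_congr rfl fun t ht => blockTerm_self A B C u v ?_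
        have := mem_range.1 ht
        omega

end BlockPfaffian

section Pfaffian

variable {n m : ℕ}

theorem ιMulti_sumElim_comp_blockIndex_symm {R M : Type*} [CommRing R] [AddCommGroup M]
    [Module R M] (u v : Fin n → M) :
    ιMulti R (2 * n) (Sum.elim u v ∘ (blockIndex n).symm) = ιMulti R n u * ιMulti R n v := by
  rw [ιMulti_mul_ιMulti, ιMulti_apply, ιMulti_apply, List.ofFn_congr (two_mul n)]
  congr 2
  funext i
  refine Fin.addCases (fun i => ?_) (fun i => ?_) i
  · have hinl : (blockIndex n).symm (Fin.cast (two_mul n).symm (Fin.castAdd n i)) = Sum.inl i := by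
      rw [Equiv.symm_apply_eq]; ext; simp [blockIndex]
    simp only [Function.comp_apply, hinl, Sum.elim_inl, Fin.append_left]
  · have hinr : (blockIndex n).symm (Fin.cast (two_mul n).symm (Fin.natAdd n i)) = Sum.inr i := by
      rw [Equiv.symm_apply_eq]; ext; simp [blockIndex]
    simp only [Function.comp_apply, hinr, Sum.elim_inr, Fin.append_right]

theorem dividedPow_half_bivector_top {M : Type*} [AddCommGroup M] [Module ℝ M]
    (A : Matrix (Fin (2 * m)) (Fin (2 * m)) ℝ) (u : Fin (2 * m) → M) :
    dividedPow ℝ m ((2⁻¹ : ℝ) • bivector A u u) = pf A • ιMulti ℝ (2 * m) u := by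
  have huniv : (univ : Finset (Fin (2 * m))).card = 2 * m := by simp
  rw [dividedPow_half_bivector, Fintype.sum_eq_single ⟨univ, huniv⟩]
  · rw [wedge, enum_univ, submatrix_id_id, Function.comp_id]
  · intro S hS
    exact absurd (Subtype.ext (S.1.card_eq_iff_eq_univ.1 (by simp [S.2]))) hS

theorem ιMulti_basis_ne_zero {R M : Type*} [CommRing R] [Nontrivial R] [AddCommGroup M]
    [Module R M] (b : Module.Basis (Fin n) R M) : ιMulti R n b ≠ 0 := by
  have huniv : (univ : Finset (Fin n)).card = n := by simp
  have hb : b.ExteriorAlgebra univ = ιMulti R n (b ∘ enum univ huniv) := basis_apply_ofCard b huniv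
  rw [enum_univ, Function.comp_id] at hb
  exact hb ▸ b.ExteriorAlgebra.ne_zero univ

theorem pf_smul (c : ℝ) (A : Matrix (Fin (2 * m)) (Fin (2 * m)) ℝ) : pf (c • A) = c ^ m * pf A := by
  simp only [pf, Matrix.smul_apply, smul_eq_mul, prod_mul_distrib, prod_const, card_univ,
    Fintype.card_fin, mul_sum]
  exact sum_congr rfl fun π _ => by ring

variable (A B C : Matrix (Fin n) (Fin n) ℝ)

theorem pf_fromBlocks :
    pf ((fromBlocks A B (-Bᵀ) C).submatrix (blockIndex n).symm (blockIndex n).symm) =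
      ∑ t ∈ range (n / 2 + 1), (-1) ^ ((n - 2 * t) / 2) * blockCoeff A B C t := by
  let b := Pi.basisFun ℝ (Fin n ⊕ Fin n)
  have hb : Sum.elim (b ∘ Sum.inl) (b ∘ Sum.inr) = b := Sum.elim_comp_inl_inr b
  have htop : ιMulti ℝ (2 * n) (b ∘ (blockIndex n).symm) ≠ 0 := by
    simpa using ιMulti_basis_ne_zero (b.reindex (blockIndex n))
  refine smul_left_injective ℝ htop ?_
  dsimp only
  rw [← dividedPow_half_bivector_top, bivector_submatrix_equiv, ← hb,
    dividedPow_half_bivector_fromBlocks, ιMulti_sumElim_comp_blockIndex_symm]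

theorem blockCoeff_neg_smul (l : ℝ) (t : ℕ) :
    blockCoeff (-(l • A)) B C t = (-l) ^ t * blockCoeff A B C t := by
  simp only [blockCoeff, ← neg_smul, submatrix_smul, Pi.smul_apply, pf_smul, mul_sum]
  refine sum_congr rfl fun S _ => sum_congr rfl fun T _ => ?_
  ring

theorem eq_of_sum_range_mul_pow_eq {R : Type*} [CommRing R] [IsDomain R] [Infinite R] {N : ℕ}
    {p q : ℕ → R}
    (h : ∀ x, ∑ t ∈ range N, p t * x ^ t = ∑ t ∈ range N, q t * x ^ t) {t : ℕ} (ht : t < N) :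
    p t = q t := by
  have hpoly : ∑ t ∈ range N, Polynomial.monomial t (p t) =
      ∑ t ∈ range N, Polynomial.monomial t (q t) :=
    Polynomial.funext fun x => by
      simpa only [Polynomial.eval_finsetSum, Polynomial.eval_monomial] using h x
  simpa [Polynomial.finsetSum_coeff, Polynomial.coeff_monomial, ht] using
    congrArg (Polynomial.coeff · t) hpoly

theorem pfaffian_block_coeff_formula_general (p : ℕ → ℝ)
    (hp : ∀ l : ℝ,
      (-1 : ℝ) ^ (n / 2) *
          pf ((fromBlocks (-(l • A)) B (-Bᵀ) C).submatrix (blockIndex n).symm (blockIndex n).symm) =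
        ∑ t ∈ range (n / 2 + 1), p t * l ^ t) :
    ∀ t ≤ n / 2, p t = blockCoeff A B C t := by
  intro t ht
  refine eq_of_sum_range_mul_pow_eq (fun l => ?_) (Nat.lt_succ_of_le ht)
  rw [← hp, pf_fromBlocks, mul_sum]
  refine sum_congr rfl fun s hs => ?_
  have hsign : (-1 : ℝ) ^ (n / 2) * (-1) ^ ((n - 2 * s) / 2) * (-1) ^ s = 1 := by
    have hs := mem_range.1 hs
    rw [← pow_add, ← pow_add]
    exact Even.neg_one_pow ⟨n / 2, by omega⟩
  rw [blockCoeff_neg_smul, neg_pow]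
  linear_combination (l ^ s * blockCoeff A B C s) * hsign

end Pfaffian

theorem pfaffian_block_coeff_formula (n : ℕ) (A B : Matrix (Fin n) (Fin n) ℝ)
    (hA : Aᵀ = -A) (hBsymm : Bᵀ = B)
    (p : ℕ → ℝ)
    (hp : ∀ l : ℝ,
      (-1 : ℝ) ^ (n / 2) *
          pf ((Matrix.fromBlocks (-(l • A)) B (-B) A).submatrix
            (blockIndex n).symm (blockIndex n).symm)
        = ∑ t ∈ Finset.range (n / 2 + 1), p t * l ^ t) :
    ∀ t ≤ n / 2,
      p t = ∑ S : {S : Finset (Fin n) // S.card = 2 * t},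
              ∑ T : {T : Finset (Fin n) // T.card = 2 * t},
        subsetSign t S.1 * subsetSign t T.1 *
          pf (A.submatrix (enum S.1 S.2) (enum S.1 S.2)) *
          pf (A.submatrix (enum T.1 T.2) (enum T.1 T.2)) *
          (B.submatrix
            (enum (S.1ᶜ) (by simp [Finset.card_compl, S.2] : (S.1ᶜ).card = n - 2 * t))
            (enum (T.1ᶜ) (by simp [Finset.card_compl, T.2] : (T.1ᶜ).card = n - 2 * t))).det := by
  exact pfaffian_block_coeff_formula_general A B A p (by simpa only [hBsymm] using hp)
end

section
/- Let A and B be symmetric real n×n matrices with B positive semi-definite, and let h_0, ..., h_{⌊n/2⌋} be the real coefficients defined by the polynomial identity haf [[λA, B], [B, A]] = Σ_{t=0}^{⌊n/2⌋} h_t λ^t (as polynomials in the real variable λ, where [[λA, B], [B, A]] is the 2n×2n block matrix with blocks λA, B, B, A). Then h_t ≥ 0 for all t. -/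
open Matrix BigOperators

/-- The hafnian of an `n × n` real matrix: for `n = 2m` it is
`(1/(m! 2^m)) Σ_π C_{π(1),π(2)} ⋯ C_{π(2m-1),π(2m)}`, and it is `0` for odd `n`. -/
noncomputable def haf {n : ℕ} (C : Matrix (Fin n) (Fin n) ℝ) : ℝ :=
  if Even n then
    (1 / ((n / 2).factorial * 2 ^ (n / 2)) : ℝ) *
      ∑ π : Equiv.Perm (Fin n),
        ∏ i : Fin (n / 2), C (π ⟨2 * i.val, by omega⟩) (π ⟨2 * i.val + 1, by omega⟩)
  else 0

/-- The permanent of an `n × n` real matrix. -/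
noncomputable def per {n : ℕ} (M : Matrix (Fin n) (Fin n) ℝ) : ℝ :=
  ∑ π : Equiv.Perm (Fin n), ∏ i, M i (π i)

/-!
Write `q_M` for the quadratic form `∑ M i j X i X j`, and `[·]` for the coefficient of the product
of all the variables. Choosing one entry in each factor of `q_M ^ n`, the only contributions to
`[q_M ^ n]` come from arranging the `2 n` variables in `n` pairs, so
`haf M = [q_M ^ n] / (n! 2 ^ n)`.

As `B` is positive semi-definite, `B + Bᵀ = Gᵀ G` for some `G`; let `ℓ k` be the linear forms given
by its rows. The form of the block matrix in the variables `x`, `y` is then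
`λ q_A(x) + q_A(y) + ∑ k, ℓ k (x) ℓ k (y)`, and the coefficient of `λ ^ t` in its `n`-th power is
a nonnegative combination of products `q_A(x) ^ t q_A(y) ^ u ∏ i, ℓ (k i) (x) ℓ (k i) (y)`. Since
`[P(x) Q(y)] = [P] [Q]`, such a product with `u = t` contributes the square
`[q_A ^ t ∏ i, ℓ (k i)] ^ 2`. For `u ≠ t` its factors in `x` and in `y` have different degrees, so
one of them has coefficient zero.
-/

open MvPolynomial

section MultilinearCoeff

variable {σ τ ι R : Type*} [Fintype σ] [Fintype τ] [CommSemiring R]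

variable (σ R) in
/-- The coefficient of the squarefree monomial `∏ i, X i`, in which every variable occurs exactly
once, as a linear functional on polynomials. On powers of quadratic forms it computes hafnians. -/
noncomputable def multilinearCoeff : MvPolynomial σ R →ₗ[R] R :=
  lcoeff R (Finsupp.equivFunOnFinite.symm 1)

lemma multilinearCoeff_monomial (d : σ →₀ ℕ) (a : R) :
    multilinearCoeff σ R (monomial d a) = if ∀ i, d i = 1 then a else 0 := by
  classical
  simp [multilinearCoeff, lcoeff, coeff_monomial, Finsupp.ext_iff]

lemma multilinearCoeff_rename_inl_mul_rename_inr (P : MvPolynomial σ R) (Q : MvPolynomial τ R) :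
    multilinearCoeff (σ ⊕ τ) R (rename Sum.inl P * rename Sum.inr Q) =
      multilinearCoeff σ R P * multilinearCoeff τ R Q := by
  induction P using MvPolynomial.induction_on' with
  | add P₁ P₂ hP₁ hP₂ => simp only [map_add, add_mul, hP₁, hP₂]
  | monomial d a =>
    induction Q using MvPolynomial.induction_on' with
    | add Q₁ Q₂ hQ₁ hQ₂ => simp only [map_add, mul_add, hQ₁, hQ₂]
    | monomial e b =>
      rw [rename_monomial, rename_monomial, monomial_mul, ← Finsupp.sumElim_eq_add]
      simp only [multilinearCoeff_monomial, Sum.forall, Finsupp.sumElim_inl, Finsupp.sumElim_inr,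
        ite_zero_mul_ite_zero]

lemma multilinearCoeff_eq_zero_of_isHomogeneous {P : MvPolynomial σ R} {d : ℕ}
    (hP : P.IsHomogeneous d) (hd : Fintype.card σ ≠ d) : multilinearCoeff σ R P = 0 :=
  hP.coeff_eq_zero (by simpa [Finsupp.degree_eq_sum] using hd)

lemma multilinearCoeff_prod_X [Fintype ι] (g : ι → σ) [Decidable g.Bijective] :
    multilinearCoeff σ R (∏ i, X (g i)) = if g.Bijective then 1 else 0 := by
  classical
  have hexp (s : σ) : (∑ i, Finsupp.single (g i) 1 : σ →₀ ℕ) s =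
      (Finset.univ.filter fun i => g i = s).card := by
    simp [Finsupp.finsetSum_apply, Finsupp.single_apply]
  have hfibre : (∀ s, (∑ i, Finsupp.single (g i) 1 : σ →₀ ℕ) s = 1) ↔ g.Bijective := by
    simp only [hexp, Finset.card_eq_one_iff_existsUnique, Finset.mem_filter_univ,
      Function.bijective_iff_existsUnique]
  simp only [X, ← monomial_sum_one, multilinearCoeff_monomial, hfibre]

lemma multilinearCoeff_sum_smul_prod_X [Fintype ι] [DecidableEq ι] [DecidableEq σ]
    (c : (ι → σ) → R) :
    multilinearCoeff σ R (∑ g, c g • ∏ i, X (g i)) = ∑ e : ι ≃ σ, c e := by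
  classical
  simp only [map_sum, map_smul, multilinearCoeff_prod_X, smul_eq_mul, mul_ite, mul_one, mul_zero]
  rw [← Finset.sum_filter, ← Finset.sum_subtype_eq_sum_filter, Finset.subtype_univ]
  exact Fintype.sum_equiv Equiv.bijectiveEquiv _ _ fun g => rfl

end MultilinearCoeff

section Quadratic

variable {σ τ ι κ R : Type*} [Fintype σ] [CommSemiring R]

lemma toMvPolynomial_eq_map_C_mulVec (M : Matrix κ σ R) :
    M.toMvPolynomial = M.map C *ᵥ X := by
  ext1 i
  simp [toMvPolynomial, mulVec, dotProduct, C_mul_X_eq_monomial]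

/-- The quadratic form `∑ i, ∑ j, M i j * X i * X j` of a square matrix, as a polynomial. Its
powers generate hafnians. -/
noncomputable def quadraticPoly (M : Matrix σ σ R) : MvPolynomial σ R :=
  X ⬝ᵥ M.toMvPolynomial

lemma quadraticPoly_eq_sum (M : Matrix σ σ R) :
    quadraticPoly M = ∑ p : σ × σ, M p.1 p.2 • (X p.1 * X p.2) := by
  simp only [quadraticPoly, toMvPolynomial_eq_map_C_mulVec, dotProduct, mulVec, Matrix.map_apply,
    Finset.mul_sum, Fintype.sum_prod_type, smul_eq_C_mul, mul_left_comm]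

lemma quadraticPoly_smul (c : R) (M : Matrix σ σ R) :
    quadraticPoly (c • M) = c • quadraticPoly M := by
  simp only [quadraticPoly_eq_sum, Matrix.smul_apply, smul_assoc, Finset.smul_sum]

lemma isHomogeneous_quadraticPoly (M : Matrix σ σ R) : (quadraticPoly M).IsHomogeneous 2 :=
  .sum _ _ _ fun i _ => (isHomogeneous_X R i).mul (M.toMvPolynomial_isHomogeneous i)

lemma rename_comp_matrix_toMvPolynomial (f : σ → τ) (M : Matrix κ σ R) :
    rename f ∘ M.toMvPolynomial = M.map C *ᵥ (X ∘ f) := by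
  ext1 k
  simp [toMvPolynomial_eq_map_C_mulVec, mulVec, dotProduct]

lemma rename_quadraticPoly (f : σ → τ) (M : Matrix σ σ R) :
    rename f (quadraticPoly M) = (X ∘ f) ⬝ᵥ M.map C *ᵥ (X ∘ f) := by
  rw [← rename_comp_matrix_toMvPolynomial]
  simp [quadraticPoly, dotProduct]

lemma multilinearCoeff_quadraticPoly_pow [Fintype ι] [DecidableEq ι] [DecidableEq σ]
    (M : Matrix σ σ R) :
    multilinearCoeff σ R (quadraticPoly M ^ Fintype.card ι) =
      ∑ e : ι ⊕ ι ≃ σ, ∏ i, M (e (.inl i)) (e (.inr i)) := by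
  rw [← multilinearCoeff_sum_smul_prod_X
    (fun g : ι ⊕ ι → σ => ∏ i, M (g (.inl i)) (g (.inr i)))]
  congr 1
  calc quadraticPoly M ^ Fintype.card ι
      = ∑ p : ι → σ × σ, ∏ i, M (p i).1 (p i).2 • (X (p i).1 * X (p i).2) := by
        rw [← Finset.card_univ, ← Finset.prod_const, quadraticPoly_eq_sum, Fintype.prod_sum]
    _ = ∑ g : ι ⊕ ι → σ, (∏ i, M (g (.inl i)) (g (.inr i))) • ∏ j, X (g j) := by
        refine Fintype.sum_equiv ((Equiv.arrowProdEquivProdArrow ι _ _).trans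
          (Equiv.sumArrowEquivProdArrow ι ι σ).symm) _ _ fun p => ?_
        rw [Finset.prod_smul, Fintype.prod_sum_type, Finset.prod_mul_distrib]
        rfl

/-- The polynomial `∑ k, ℓ k (x) * ℓ k (y)` in two disjoint copies `x`, `y` of the variables.
It is the contribution of the off-diagonal blocks to the quadratic form of a block matrix. -/
noncomputable def couplingPoly [Fintype κ] (ℓ : κ → MvPolynomial σ R) :
    MvPolynomial (σ ⊕ σ) R :=
  ∑ k, rename Sum.inl (ℓ k) * rename Sum.inr (ℓ k)

lemma couplingPoly_toMvPolynomial [Fintype κ] (G : Matrix κ σ R) :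
    couplingPoly G.toMvPolynomial =
      (G.map C *ᵥ (X ∘ Sum.inl)) ⬝ᵥ (G.map C *ᵥ (X ∘ Sum.inr)) := by
  simp only [← rename_comp_matrix_toMvPolynomial]
  rfl

lemma map_mulVec_dotProduct_map_mulVec_of_transpose_mul_self_eq {S : Type*} [CommSemiring S]
    [Fintype κ] (f : R →+* S) {G : Matrix κ σ R} {B₁ B₂ : Matrix σ σ R}
    (hG : Gᵀ * G = B₁ + B₂ᵀ) (x y : σ → S) :
    (G.map f *ᵥ x) ⬝ᵥ (G.map f *ᵥ y) = x ⬝ᵥ B₁.map f *ᵥ y + y ⬝ᵥ B₂.map f *ᵥ x := by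
  calc (G.map f *ᵥ x) ⬝ᵥ (G.map f *ᵥ y)
      = x ⬝ᵥ (Gᵀ * G).map f *ᵥ y := by
        rw [Matrix.map_mul, ← mulVec_mulVec, dotProduct_mulVec x, transpose_map, vecMul_transpose]
    _ = x ⬝ᵥ B₁.map f *ᵥ y + x ⬝ᵥ (B₂.map f)ᵀ *ᵥ y := by
        rw [hG, Matrix.map_add _ (map_add f), transpose_map, add_mulVec, dotProduct_add]
    _ = x ⬝ᵥ B₁.map f *ᵥ y + y ⬝ᵥ B₂.map f *ᵥ x := by
        rw [mulVec_transpose, dotProduct_comm x (y ᵥ* _), ← dotProduct_mulVec]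

lemma quadraticPoly_fromBlocks [Fintype κ] (A₁ B₁ B₂ A₂ : Matrix σ σ R) {G : Matrix κ σ R}
    (hG : Gᵀ * G = B₁ + B₂ᵀ) :
    quadraticPoly (fromBlocks A₁ B₁ B₂ A₂) =
      rename Sum.inl (quadraticPoly A₁) + (rename Sum.inr (quadraticPoly A₂) +
        couplingPoly G.toMvPolynomial) := by
  have hX : (X : σ ⊕ σ → MvPolynomial (σ ⊕ σ) R) = Sum.elim (X ∘ Sum.inl) (X ∘ Sum.inr) :=
    (Sum.elim_comp_inl_inr X).symm
  rw [rename_quadraticPoly, rename_quadraticPoly, couplingPoly_toMvPolynomial,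
    map_mulVec_dotProduct_map_mulVec_of_transpose_mul_self_eq C hG, quadraticPoly,
    toMvPolynomial_eq_map_C_mulVec, fromBlocks_map, fromBlocks_mulVec, hX,
    sumElim_dotProduct_sumElim, Sum.elim_comp_inl, Sum.elim_comp_inr, dotProduct_add,
    dotProduct_add]
  ring

lemma multilinearCoeff_mul_couplingPoly_pow [Fintype κ] (P Q : MvPolynomial σ R)
    (ℓ : κ → MvPolynomial σ R) (m : ℕ) :
    multilinearCoeff (σ ⊕ σ) R (rename Sum.inl P * rename Sum.inr Q * couplingPoly ℓ ^ m) =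
      ∑ f : Fin m → κ, multilinearCoeff σ R (P * ∏ i, ℓ (f i)) *
        multilinearCoeff σ R (Q * ∏ i, ℓ (f i)) := by
  simp only [← multilinearCoeff_rename_inl_mul_rename_inr, ← map_sum]
  congr 1
  rw [couplingPoly, Fintype.sum_pow, Finset.mul_sum]
  refine Finset.sum_congr rfl fun f _ => ?_
  simp only [map_mul, map_prod, Finset.prod_mul_distrib]
  ring

lemma multilinearCoeff_mul_couplingPoly_pow_eq_zero [Fintype κ] {P Q : MvPolynomial σ R}
    {ℓ : κ → MvPolynomial σ R} {a b d : ℕ} (hP : P.IsHomogeneous a) (hQ : Q.IsHomogeneous b)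
    (hℓ : ∀ k, (ℓ k).IsHomogeneous d) (hab : a ≠ b) (m : ℕ) :
    multilinearCoeff (σ ⊕ σ) R (rename Sum.inl P * rename Sum.inr Q * couplingPoly ℓ ^ m) = 0 := by
  rw [multilinearCoeff_mul_couplingPoly_pow]
  refine Finset.sum_eq_zero fun f _ => ?_
  have hprod : (∏ i, ℓ (f i)).IsHomogeneous (∑ _i : Fin m, d) := .prod _ _ _ fun i _ => hℓ (f i)
  rcases ne_or_eq (Fintype.card σ) (a + ∑ _i : Fin m, d) with hcard | hcard
  · rw [multilinearCoeff_eq_zero_of_isHomogeneous (hP.mul hprod) hcard, zero_mul]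
  · rw [multilinearCoeff_eq_zero_of_isHomogeneous (hQ.mul hprod) (by omega), mul_zero]

end Quadratic

section Nonneg

variable {σ κ R : Type*} [Fintype σ] [Fintype κ]
variable [CommRing R] [LinearOrder R] [IsStrictOrderedRing R]

lemma multilinearCoeff_mul_self_mul_couplingPoly_pow_nonneg (P : MvPolynomial σ R)
    (ℓ : κ → MvPolynomial σ R) (m : ℕ) :
    0 ≤ multilinearCoeff (σ ⊕ σ) R (rename Sum.inl P * rename Sum.inr P * couplingPoly ℓ ^ m) := by
  rw [multilinearCoeff_mul_couplingPoly_pow]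
  exact Finset.sum_nonneg fun f _ => mul_self_nonneg _

lemma multilinearCoeff_pow_mul_add_couplingPoly_pow_nonneg {Q : MvPolynomial σ R}
    {ℓ : κ → MvPolynomial σ R} {a d : ℕ} (hQ : Q.IsHomogeneous a) (ha : a ≠ 0)
    (hℓ : ∀ k, (ℓ k).IsHomogeneous d) (t s : ℕ) :
    0 ≤ multilinearCoeff (σ ⊕ σ) R
      (rename Sum.inl Q ^ t * (rename Sum.inr Q + couplingPoly ℓ) ^ s) := by
  rw [add_pow, Finset.mul_sum, map_sum]
  refine Finset.sum_nonneg fun u _ => ?_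
  have hterm : rename Sum.inl Q ^ t *
      (rename Sum.inr Q ^ u * couplingPoly ℓ ^ (s - u) * (s.choose u : MvPolynomial (σ ⊕ σ) R)) =
      s.choose u •
        (rename Sum.inl (Q ^ t) * rename Sum.inr (Q ^ u) * couplingPoly ℓ ^ (s - u)) := by
    simp only [map_pow, nsmul_eq_mul]
    ring
  rw [hterm, map_nsmul]
  refine nsmul_nonneg ?_ _
  rcases eq_or_ne t u with rfl | htu
  · exact multilinearCoeff_mul_self_mul_couplingPoly_pow_nonneg (Q ^ t) ℓ _
  · have hdeg : a * t ≠ a * u := by simp [ha, htu]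
    exact (multilinearCoeff_mul_couplingPoly_pow_eq_zero (hQ.pow t) (hQ.pow u) hℓ hdeg _).ge

end Nonneg

lemma exists_polynomial_coeff_nonneg_eval_eq {R S : Type*} [CommSemiring R] [PartialOrder R]
    [IsOrderedRing R] [CommSemiring S] [Algebra R S] (φ : S →ₗ[R] R) (a b : S) (n : ℕ)
    (hφ : ∀ t s, 0 ≤ φ (a ^ t * b ^ s)) :
    ∃ p : Polynomial R, (∀ t, 0 ≤ p.coeff t) ∧ ∀ l, p.eval l = φ ((l • a + b) ^ n) := by
  refine ⟨∑ t ∈ Finset.range (n + 1), .monomial t (n.choose t • φ (a ^ t * b ^ (n - t))),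
    fun t => ?_, fun l => ?_⟩
  · rw [Polynomial.finsetSum_coeff]
    refine Finset.sum_nonneg fun u _ => ?_
    rw [Polynomial.coeff_monomial]
    split_ifs
    exacts [nsmul_nonneg (hφ _ _) _, le_rfl]
  · rw [Polynomial.eval_finsetSum, add_pow, map_sum]
    refine Finset.sum_congr rfl fun t _ => ?_
    rw [Polynomial.eval_monomial, ← nsmul_eq_mul', smul_pow, map_nsmul, smul_mul_assoc,
      smul_mul_assoc, map_smul, smul_eq_mul, mul_comm (l ^ t)]

lemma coeff_eq_of_eval_eq_sum {R : Type*} [CommRing R] [IsDomain R] [Infinite R]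
    {p : Polynomial R} {h : ℕ → R} {N : ℕ}
    (hp : ∀ l, p.eval l = ∑ t ∈ Finset.range N, h t * l ^ t) {t : ℕ} (ht : t < N) :
    p.coeff t = h t := by
  have hpoly : p = ∑ t ∈ Finset.range N, .monomial t (h t) :=
    Polynomial.funext fun l => by
      simp only [hp, Polynomial.eval_finsetSum, Polynomial.eval_monomial]
  simp [hpoly, Polynomial.finsetSum_coeff, Polynomial.coeff_monomial, ht]

lemma exists_transpose_mul_self_eq_add_transpose {σ : Type*} [Fintype σ] {B : Matrix σ σ ℝ}
    (hB : ∀ x : σ → ℝ, 0 ≤ x ⬝ᵥ B *ᵥ x) :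
    ∃ G : Matrix σ σ ℝ, Gᵀ * G = B + Bᵀ := by
  classical
  have hpsd : (B + Bᵀ).PosSemidef := by
    refine .of_dotProduct_mulVec_nonneg (by simp [IsHermitian, add_comm]) fun x => ?_
    have hx : x ⬝ᵥ Bᵀ *ᵥ x = x ⬝ᵥ B *ᵥ x := by
      rw [mulVec_transpose, dotProduct_comm, ← dotProduct_mulVec]
    rw [star_trivial, add_mulVec, dotProduct_add, hx]
    exact add_nonneg (hB x) (hB x)
  open scoped MatrixOrder Matrix.Norms.L2Operator in
  obtain ⟨G, hG⟩ := CStarAlgebra.nonneg_iff_eq_star_mul_self.mp hpsd.nonneg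
  exact ⟨G, by simpa [star_eq_conjTranspose] using hG.symm⟩

section Hafnian

/-- The equivalence sending `inl i` to `2 * i` and `inr i` to `2 * i + 1`. It arranges the pairs of
indices `π (2 i)`, `π (2 i + 1)` in the definition of `haf` as two functions of `i`. -/
noncomputable def evenOddEquiv (n : ℕ) : Fin n ⊕ Fin n ≃ Fin (2 * n) :=
  .ofBijective (Sum.elim (fun i => ⟨2 * i.val, by omega⟩) (fun i => ⟨2 * i.val + 1, by omega⟩)) <|
    (Fintype.bijective_iff_injective_and_card _).2
      ⟨by rintro (i | i) (j | j) <;> grind, by simp [two_mul]⟩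

lemma haf_submatrix {σ : Type*} [Fintype σ] {n : ℕ} (e : Fin (2 * n) ≃ σ) (M : Matrix σ σ ℝ) :
    haf (M.submatrix e e) =
      1 / (n.factorial * 2 ^ n) * multilinearCoeff σ ℝ (quadraticPoly M ^ n) := by
  classical
  have hn : 2 * n / 2 = n := by omega
  have hhaf : haf (M.submatrix e e) = 1 / (n.factorial * 2 ^ n) *
      ∑ π : Equiv.Perm (Fin (2 * n)), ∏ i : Fin n,
        M (e (π ⟨2 * i.val, by omega⟩)) (e (π ⟨2 * i.val + 1, by omega⟩)) := by
    rw [haf, if_pos (even_two_mul n)]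
    congr 1
    · rw [hn]
    exact Finset.sum_congr rfl fun π _ => Fintype.prod_equiv (finCongr hn) _ _ fun i => rfl
  have hpairing := multilinearCoeff_quadraticPoly_pow (ι := Fin n) M
  rw [Fintype.card_fin] at hpairing
  rw [hhaf, hpairing]
  congr 1
  exact Fintype.sum_equiv ((evenOddEquiv n).symm.equivCongr e) _ _ fun π =>
    Finset.prod_congr rfl fun i _ => by simp [evenOddEquiv]

theorem hafnian_block_coeffs_nonneg_general (n : ℕ) (A B : Matrix (Fin n) (Fin n) ℝ)
    (hB : ∀ x : Fin n → ℝ, 0 ≤ x ⬝ᵥ B *ᵥ x) (h : ℕ → ℝ)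
    (hh : ∀ l : ℝ,
      haf ((Matrix.fromBlocks (l • A) B B A).submatrix
          (blockIndex n).symm (blockIndex n).symm)
        = ∑ t ∈ Finset.range (n / 2 + 1), h t * l ^ t) :
    ∀ t ≤ n / 2, 0 ≤ h t := by
  obtain ⟨G, hG⟩ := exists_transpose_mul_self_eq_add_transpose hB
  obtain ⟨p, hp, hp_eval⟩ := exists_polynomial_coeff_nonneg_eval_eq
    (multilinearCoeff (Fin n ⊕ Fin n) ℝ) (rename Sum.inl (quadraticPoly A))
    (rename Sum.inr (quadraticPoly A) + couplingPoly G.toMvPolynomial) n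
    (multilinearCoeff_pow_mul_add_couplingPoly_pow_nonneg (isHomogeneous_quadraticPoly A)
      two_ne_zero G.toMvPolynomial_isHomogeneous)
  set c : ℝ := 1 / (n.factorial * 2 ^ n)
  have hcp : ∀ l, (Polynomial.C c * p).eval l = ∑ t ∈ Finset.range (n / 2 + 1), h t * l ^ t := by
    intro l
    rw [← hh, haf_submatrix, quadraticPoly_fromBlocks _ _ _ _ hG, quadraticPoly_smul, map_smul,
      Polynomial.eval_C_mul, hp_eval]
  intro t ht
  rw [← coeff_eq_of_eval_eq_sum hcp (Nat.lt_succ_of_le ht), Polynomial.coeff_C_mul]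
  exact mul_nonneg (by positivity) (hp t)

end Hafnian

theorem hafnian_block_coeffs_nonneg (n : ℕ) (A B : Matrix (Fin n) (Fin n) ℝ)
    (hA : Aᵀ = A) (hBsymm : Bᵀ = B)
    (hBpsd : ∀ x : Fin n → ℝ, 0 ≤ x ⬝ᵥ B *ᵥ x)
    (h : ℕ → ℝ)
    (hh : ∀ l : ℝ,
      haf ((Matrix.fromBlocks (l • A) B B A).submatrix
          (blockIndex n).symm (blockIndex n).symm)
        = ∑ t ∈ Finset.range (n / 2 + 1), h t * l ^ t) :
    ∀ t ≤ n / 2, 0 ≤ h t :=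
  hafnian_block_coeffs_nonneg_general n A B hBpsd h hh
end
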